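/- arXiv:math/0305184 — 9 statements merged into one kernel-verified Lean document; each statement's English description precedes it below -/
import Mathlib

section
/- Let a, b, a', b' be nonzero complex numbers satisfying a + b + a' + b' = 0 and (a·a')/(b·b') = −1. Define a* = 1/conj(a), a'* = 1/conj(a'), b* = −1/conj(b), b'* = −1/conj(b'). Then a* + b* + a'* + b'* = 0 and (a*·a'*)/(b*·b'*) = −1. -/
/-!
Field homomorphisms preserve both conditions, so conjugation is harmless and only inversion has to
be studied. In a conformal square the sums of the two pairs of opposite sides are negatives of each
other, and so are the products; the quotients sum / product, which are the sums of the reciprocals,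
therefore agree. The cross-ratio of the reciprocals is inverted, and `-1` is its own inverse.
-/

/-- A conformal square: a quadrilateral, given by its consecutive sides `a, b, a', b'`, that closes
up and has cross-ratio `-1`. Degenerate sides are excluded automatically: if a side is zero, the
quotient (with `x / 0 = 0`) is `0`, not `-1`. -/
structure IsConformalSquare {K : Type*} [Field K] (a b a' b' : K) : Prop where
  sum_eq_zero : a + b + a' + b' = 0
  crossRatio_eq : a * a' / (b * b') = -1

namespace IsConformalSquare

variable {K L : Type*} [Field K] [Field L] {a b a' b' : K}

lemma map (h : IsConformalSquare a b a' b') (σ : K →+* L) :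
    IsConformalSquare (σ a) (σ b) (σ a') (σ b') where
  sum_eq_zero := by simpa only [map_add, map_zero] using congrArg σ h.sum_eq_zero
  crossRatio_eq := by
    simpa only [map_div₀, map_mul, map_neg, map_one] using congrArg σ h.crossRatio_eq

lemma sides_ne_zero (h : IsConformalSquare a b a' b') :
    (a ≠ 0 ∧ a' ≠ 0) ∧ (b ≠ 0 ∧ b' ≠ 0) := by
  have hquot : a * a' / (b * b') ≠ 0 := h.crossRatio_eq ▸ neg_ne_zero.mpr one_ne_zero
  simpa only [div_ne_zero_iff, mul_ne_zero_iff] using hquot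

lemma add_opposite_eq_neg (h : IsConformalSquare a b a' b') : a + a' = -(b + b') := by
  linear_combination h.sum_eq_zero

lemma mul_opposite_eq_neg (h : IsConformalSquare a b a' b') : a * a' = -(b * b') := by
  obtain ⟨-, hb, hb'⟩ := h.sides_ne_zero
  rw [(div_eq_iff (mul_ne_zero hb hb')).mp h.crossRatio_eq, neg_one_mul]

lemma inv_add_inv_opposite_eq (h : IsConformalSquare a b a' b') :
    a⁻¹ + a'⁻¹ = b⁻¹ + b'⁻¹ := by
  obtain ⟨⟨ha, ha'⟩, hb, hb'⟩ := h.sides_ne_zero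
  calc
    a⁻¹ + a'⁻¹ = (a + a') / (a * a') := inv_add_inv ha ha'
    _ = -(b + b') / -(b * b') := by rw [h.add_opposite_eq_neg, h.mul_opposite_eq_neg]
    _ = (b + b') / (b * b') := neg_div_neg_eq _ _
    _ = b⁻¹ + b'⁻¹ := (inv_add_inv hb hb').symm

lemma inv (h : IsConformalSquare a b a' b') :
    IsConformalSquare a⁻¹ (-b⁻¹) a'⁻¹ (-b'⁻¹) where
  sum_eq_zero := by linear_combination h.inv_add_inv_opposite_eq
  crossRatio_eq := calc
    a⁻¹ * a'⁻¹ / (-b⁻¹ * -b'⁻¹) = (a * a' / (b * b'))⁻¹ := by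
      rw [neg_mul_neg, ← mul_inv, ← mul_inv, inv_div_inv, inv_div]
    _ = -1 := by rw [h.crossRatio_eq, inv_neg_one]

end IsConformalSquare

theorem dual_conformal_square_general {K L : Type*} [Field K] [Field L] (σ : K →+* L)
    {a b a' b' : K} (h : IsConformalSquare a b a' b') :
    IsConformalSquare (1 / σ a) (-(1 / σ b)) (1 / σ a') (-(1 / σ b')) := by
  simpa only [one_div] using (h.map σ).inv

/-- **Lemma underlying the Christoffel dualization of conformal squares.**
If `a, b, a', b'` are nonzero complex numbers with `a + b + a' + b' = 0` and
`(a·a')/(b·b') = -1`, then the dual sides `a* = 1/conj a`, `a'* = 1/conj a'`,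
`b* = -1/conj b`, `b'* = -1/conj b'` satisfy `a* + b* + a'* + b'* = 0` and
`(a*·a'*)/(b*·b'*) = -1`. -/
theorem dual_conformal_square (a b a' b' : ℂ)
    (ha : a ≠ 0) (hb : b ≠ 0) (ha' : a' ≠ 0) (hb' : b' ≠ 0)
    (hsum : a + b + a' + b' = 0)
    (hcr : a * a' / (b * b') = -1) :
    (1 / (starRingEnd ℂ) a) + (-(1 / (starRingEnd ℂ) b)) + (1 / (starRingEnd ℂ) a')
        + (-(1 / (starRingEnd ℂ) b')) = 0 ∧
    ((1 / (starRingEnd ℂ) a) * (1 / (starRingEnd ℂ) a')) /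
        ((-(1 / (starRingEnd ℂ) b)) * (-(1 / (starRingEnd ℂ) b'))) = -1 := by
  have hdual := dual_conformal_square_general (starRingEnd ℂ) ⟨hsum, hcr⟩
  exact ⟨hdual.sum_eq_zero, hdual.crossRatio_eq⟩
end

section
/- Let f : ℤ² → ℂ be such that any two values at adjacent lattice points are distinct and every elementary quadrilateral has cross-ratio −1, i.e. for all (m,n) ∈ ℤ²: (f(m,n) − f(m+1,n))·(f(m+1,n+1) − f(m,n+1)) / ((f(m+1,n) − f(m+1,n+1))·(f(m,n+1) − f(m,n))) = −1. Then there exists f* : ℤ² → ℂ such that for all (m,n): f*(m+1,n) − f*(m,n) = 1/conj(f(m+1,n) − f(m,n)) and f*(m,n+1) − f*(m,n) = −1/conj(f(m,n+1) − f(m,n)); moreover every elementary quadrilateral of f* also has cross-ratio −1. -/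
/-!
Let `a`, `b`, `c`, `d` be the bottom, right, top and left edges of a quadrilateral, so that
`a + b = d + c`, and let its cross-ratio be `(a * c) / (b * d) = α / β`. With
`k = α / (a * c) = β / (b * d)` the proposed dual edges `α / a`, `β / b`, `α / c`, `β / d` are
`k * c`, `k * d`, `k * a`, `k * b`: up to the factor `k` the dual quadrilateral is the original one
with opposite edges exchanged, that is, its reflection in a point. Hence it closes up and has the
same cross-ratio. A discrete one-form on `ℤ²` that is closed around every elementary quadrilateral
is exact, so the dual edges integrate to a map; conjugating this map conjugates its edges and
cross-ratios.
-/

open Function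

section Potential

variable {G : Type*} [AddCommGroup G]

theorem fwdDiff_one_surjective : Surjective (fwdDiff (1 : ℤ) : (ℤ → G) → ℤ → G) := by
  intro p
  let S : ℤ → G := fun n ↦
    n.inductionOn' 0 0 (fun k _ s ↦ s + p k) (fun k _ s ↦ s - p (k - 1))
  refine ⟨S, funext fun n ↦ sub_eq_iff_eq_add'.2 ?_⟩
  rcases le_or_gt 0 n with hn | hn
  · exact Int.inductionOn'_add_one hn
  · have hS : S (n + 1 - 1) = S (n + 1) - p (n + 1 - 1) :=
      Int.inductionOn'_sub_one (Int.add_one_le_iff.2 hn)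
    rw [add_sub_cancel_right] at hS
    exact sub_eq_iff_eq_add.1 hS.symm

theorem exists_potential_of_closed (h v : ℤ → ℤ → G)
    (closed : ∀ m n, h m n + v (m + 1) n = v m n + h m (n + 1)) :
    ∃ g : ℤ → ℤ → G, (∀ m n, g (m + 1) n - g m n = h m n) ∧
      ∀ m n, g m (n + 1) - g m n = v m n := by
  choose V hV using fun m ↦ fwdDiff_one_surjective (v m)
  replace hV (m n : ℤ) : V m (n + 1) - V m n = v m n := congrFun (hV m) n
  -- Closedness says that what `V` misses of `h` depends on `m` alone.
  let defect (m n : ℤ) : G := h m n - (V (m + 1) n - V m n)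
  have defect_periodic (m : ℤ) : Periodic (defect m) 1 := by
    intro n
    have hdiff : defect m (n + 1) - defect m n =
        v m n + h m (n + 1) - (h m n + v (m + 1) n) := by
      rw [← hV m n, ← hV (m + 1) n]
      simp only [defect]
      abel
    rwa [closed, sub_self, sub_eq_zero] at hdiff
  have defect_eq (m n : ℤ) : defect m n = defect m 0 := by
    simpa only [zsmul_one, Int.cast_id] using (defect_periodic m).zsmul_eq n
  obtain ⟨C, hC⟩ := fwdDiff_one_surjective fun m ↦ defect m 0
  refine ⟨fun m n ↦ C m + V m n, fun m n ↦ ?_, fun m n ↦ ?_⟩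
  · calc C (m + 1) + V (m + 1) n - (C m + V m n)
        = (C (m + 1) - C m) + (V (m + 1) n - V m n) := add_sub_add_comm ..
      _ = defect m n + (V (m + 1) n - V m n) := by rw [defect_eq, ← congrFun hC m, fwdDiff]
      _ = h m n := sub_add_cancel ..
  · rw [add_sub_add_left_eq_sub, hV]

end Potential

variable {K L : Type*} [Field K] [Field L]

/-- The cross-ratio of the quadrilateral with consecutive vertices `p`, `q`, `r`, `s`, in the
convention under which a square has cross-ratio `-1`; it takes the junk value `0` if `q = r` or
`s = p`. -/
def crossRatio (p q r s : K) : K :=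
  (p - q) * (r - s) / ((q - r) * (s - p))

section Quadrilateral

variable {α β p q r s : K}

theorem map_crossRatio (σ : K →+* L) (p q r s : K) :
    σ (crossRatio p q r s) = crossRatio (σ p) (σ q) (σ r) (σ s) := by
  simp only [crossRatio, map_div₀, map_mul, map_sub]

theorem crossRatio_eq_div_edges (p q r s : K) :
    crossRatio p q r s = (q - p) * (r - s) / ((r - q) * (s - p)) := by
  rw [crossRatio, ← neg_sub q p, ← neg_sub r q, neg_mul, neg_mul, neg_div_neg_eq]

theorem crossRatio_ne_zero (hqp : q ≠ p) (hrq : r ≠ q) (hrs : r ≠ s) (hsp : s ≠ p) :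
    crossRatio p q r s ≠ 0 := by
  rw [crossRatio_eq_div_edges]
  exact div_ne_zero (mul_ne_zero (sub_ne_zero.2 hqp) (sub_ne_zero.2 hrs))
    (mul_ne_zero (sub_ne_zero.2 hrq) (sub_ne_zero.2 hsp))

theorem crossRatio_eq_of_edges_eq_mul {k p' q' r' s' : K} (hk : k ≠ 0)
    (hqp : q' - p' = k * (r - s)) (hrq : r' - q' = k * (s - p))
    (hrs : r' - s' = k * (q - p)) (hsp : s' - p' = k * (r - q)) :
    crossRatio p' q' r' s' = crossRatio p q r s := by
  rw [crossRatio_eq_div_edges, crossRatio_eq_div_edges, hqp, hrq, hrs, hsp]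
  calc k * (r - s) * (k * (q - p)) / (k * (s - p) * (k * (r - q)))
      = k * k * ((q - p) * (r - s)) / (k * k * ((r - q) * (s - p))) := by congr 1 <;> ring
    _ = (q - p) * (r - s) / ((r - q) * (s - p)) := mul_div_mul_left _ _ (mul_ne_zero hk hk)

theorem exists_div_edges_eq_mul_opposite_edges
    (hqp : q ≠ p) (hrq : r ≠ q) (hrs : r ≠ s) (hsp : s ≠ p) (hcr : crossRatio p q r s = α / β) :
    ∃ k ≠ 0, α / (q - p) = k * (r - s) ∧ β / (r - q) = k * (s - p) ∧
      α / (r - s) = k * (q - p) ∧ β / (s - p) = k * (r - q) := by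
  obtain ⟨hα, hβ⟩ := div_ne_zero_iff.1 (hcr ▸ crossRatio_ne_zero hqp hrq hrs hsp)
  rw [crossRatio_eq_div_edges] at hcr
  rw [← sub_ne_zero] at hqp hrq hrs hsp
  have scale_eq : α / ((q - p) * (r - s)) = β / ((r - q) * (s - p)) := by
    rw [div_eq_div_iff (mul_ne_zero hrq hsp) hβ] at hcr
    rw [div_eq_div_iff (mul_ne_zero hqp hrs) (mul_ne_zero hrq hsp), ← hcr, mul_comm]
  refine ⟨α / ((q - p) * (r - s)), div_ne_zero hα (mul_ne_zero hqp hrs), ?_, ?_, ?_, ?_⟩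
  · rw [div_mul_eq_mul_div, mul_div_mul_right _ _ hrs]
  · rw [scale_eq, div_mul_eq_mul_div, mul_div_mul_right _ _ hsp]
  · rw [div_mul_eq_mul_div, mul_comm (q - p), mul_div_mul_right _ _ hqp]
  · rw [scale_eq, div_mul_eq_mul_div, mul_comm (r - q), mul_div_mul_right _ _ hrq]

end Quadrilateral

/-- A map `f : ℤ² → K` is discrete isothermic with labels `α` on horizontal and `β` on vertical
edges if its edges do not degenerate and the elementary quadrilateral at `(m, n)` has cross-ratio
`α m / β n`. The labels are part of the data, since the cross-ratios determine them only up to a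
common factor; `α = 1`, `β = -1` gives the discrete conformal maps. -/
structure IsDiscreteIsothermic (α β : ℤ → K) (f : ℤ → ℤ → K) : Prop where
  horizontal_ne (m n : ℤ) : f (m + 1) n ≠ f m n
  vertical_ne (m n : ℤ) : f m (n + 1) ≠ f m n
  crossRatio_eq (m n : ℤ) :
    crossRatio (f m n) (f (m + 1) n) (f (m + 1) (n + 1)) (f m (n + 1)) = α m / β n

namespace IsDiscreteIsothermic

variable {α β : ℤ → K} {f : ℤ → ℤ → K}

theorem map (hf : IsDiscreteIsothermic α β f) (σ : K →+* L) :
    IsDiscreteIsothermic (σ ∘ α) (σ ∘ β) fun m n ↦ σ (f m n) where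
  horizontal_ne m n := σ.injective.ne (hf.horizontal_ne m n)
  vertical_ne m n := σ.injective.ne (hf.vertical_ne m n)
  crossRatio_eq m n := by
    rw [← map_crossRatio, hf.crossRatio_eq, map_div₀, comp_apply, comp_apply]

theorem labels_ne_zero (hf : IsDiscreteIsothermic α β f) (m n : ℤ) : α m ≠ 0 ∧ β n ≠ 0 :=
  div_ne_zero_iff.1 <| hf.crossRatio_eq m n ▸ crossRatio_ne_zero (hf.horizontal_ne m n)
    (hf.vertical_ne (m + 1) n) (hf.horizontal_ne m (n + 1)) (hf.vertical_ne m n)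

theorem exists_dual_edges_eq_mul (hf : IsDiscreteIsothermic α β f) (m n : ℤ) :
    ∃ k ≠ 0, α m / (f (m + 1) n - f m n) = k * (f (m + 1) (n + 1) - f m (n + 1)) ∧
      β n / (f (m + 1) (n + 1) - f (m + 1) n) = k * (f m (n + 1) - f m n) ∧
      α m / (f (m + 1) (n + 1) - f m (n + 1)) = k * (f (m + 1) n - f m n) ∧
      β n / (f m (n + 1) - f m n) = k * (f (m + 1) (n + 1) - f (m + 1) n) :=
  exists_div_edges_eq_mul_opposite_edges (hf.horizontal_ne m n) (hf.vertical_ne (m + 1) n)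
    (hf.horizontal_ne m (n + 1)) (hf.vertical_ne m n) (hf.crossRatio_eq m n)

theorem dual_edges_closed (hf : IsDiscreteIsothermic α β f) (m n : ℤ) :
    α m / (f (m + 1) n - f m n) + β n / (f (m + 1) (n + 1) - f (m + 1) n) =
      β n / (f m (n + 1) - f m n) + α m / (f (m + 1) (n + 1) - f m (n + 1)) := by
  obtain ⟨k, -, hbottom, hright, htop, hleft⟩ := hf.exists_dual_edges_eq_mul m n
  rw [hbottom, hright, htop, hleft]
  ring

theorem of_dual_edges (hf : IsDiscreteIsothermic α β f) {g : ℤ → ℤ → K}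
    (hgx : ∀ m n, g (m + 1) n - g m n = α m / (f (m + 1) n - f m n))
    (hgy : ∀ m n, g m (n + 1) - g m n = β n / (f m (n + 1) - f m n)) :
    IsDiscreteIsothermic α β g where
  horizontal_ne m n := sub_ne_zero.1 <| hgx m n ▸
    div_ne_zero (hf.labels_ne_zero m n).1 (sub_ne_zero.2 (hf.horizontal_ne m n))
  vertical_ne m n := sub_ne_zero.1 <| hgy m n ▸
    div_ne_zero (hf.labels_ne_zero m n).2 (sub_ne_zero.2 (hf.vertical_ne m n))
  crossRatio_eq m n := by
    obtain ⟨k, hk, hbottom, hright, htop, hleft⟩ := hf.exists_dual_edges_eq_mul m n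
    rw [← hf.crossRatio_eq m n]
    exact crossRatio_eq_of_edges_eq_mul hk ((hgx m n).trans hbottom)
      ((hgy (m + 1) n).trans hright) ((hgx m (n + 1)).trans htop) ((hgy m n).trans hleft)

theorem exists_dual (hf : IsDiscreteIsothermic α β f) :
    ∃ g : ℤ → ℤ → K, (∀ m n, g (m + 1) n - g m n = α m / (f (m + 1) n - f m n)) ∧
      (∀ m n, g m (n + 1) - g m n = β n / (f m (n + 1) - f m n)) ∧
      IsDiscreteIsothermic α β g := by
  obtain ⟨g, hgx, hgy⟩ := exists_potential_of_closed
    (fun m n ↦ α m / (f (m + 1) n - f m n)) (fun m n ↦ β n / (f m (n + 1) - f m n))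
    hf.dual_edges_closed
  exact ⟨g, hgx, hgy, hf.of_dual_edges hgx hgy⟩

end IsDiscreteIsothermic

theorem discrete_isothermic_dual_general (σ : K →+* L) {α β : ℤ → K} {f : ℤ → ℤ → K}
    (hf : IsDiscreteIsothermic α β f) :
    ∃ g : ℤ → ℤ → L,
      (∀ m n, g (m + 1) n - g m n = σ (α m) / σ (f (m + 1) n - f m n)) ∧
      (∀ m n, g m (n + 1) - g m n = σ (β n) / σ (f m (n + 1) - f m n)) ∧
      IsDiscreteIsothermic (σ ∘ α) (σ ∘ β) g := by
  obtain ⟨g, hgx, hgy, hg⟩ := hf.exists_dual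
  refine ⟨fun m n ↦ σ (g m n), fun m n ↦ ?_, fun m n ↦ ?_, hg.map σ⟩
  · rw [← map_sub, hgx, map_div₀]
  · rw [← map_sub, hgy, map_div₀]

/-- **Christoffel dual of a planar discrete isothermic surface.**
If `f : ℤ² → ℂ` takes distinct values at adjacent lattice points and every
elementary quadrilateral has cross-ratio `-1`, then there is a dual map
`f* : ℤ² → ℂ` whose horizontal edges are `1/conj(Δf)`, whose vertical edges
are `-1/conj(Δf)`, and whose elementary quadrilaterals again have
cross-ratio `-1`. -/
theorem discrete_isothermic_dual (f : ℤ → ℤ → ℂ)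
    (hadjx : ∀ m n : ℤ, f (m + 1) n ≠ f m n)
    (hadjy : ∀ m n : ℤ, f m (n + 1) ≠ f m n)
    (hcr : ∀ m n : ℤ,
      (f m n - f (m + 1) n) * (f (m + 1) (n + 1) - f m (n + 1)) /
        ((f (m + 1) n - f (m + 1) (n + 1)) * (f m (n + 1) - f m n)) = -1) :
    ∃ g : ℤ → ℤ → ℂ,
      (∀ m n : ℤ, g (m + 1) n - g m n = 1 / (starRingEnd ℂ) (f (m + 1) n - f m n)) ∧
      (∀ m n : ℤ, g m (n + 1) - g m n = -(1 / (starRingEnd ℂ) (f m (n + 1) - f m n))) ∧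
      (∀ m n : ℤ,
        (g m n - g (m + 1) n) * (g (m + 1) (n + 1) - g m (n + 1)) /
          ((g (m + 1) n - g (m + 1) (n + 1)) * (g m (n + 1) - g m n)) = -1) := by
  obtain ⟨g, hgx, hgy, hg⟩ := discrete_isothermic_dual_general (starRingEnd ℂ)
    (α := fun _ ↦ 1) (β := fun _ ↦ -1) ⟨hadjx, hadjy, by simpa [crossRatio] using hcr⟩
  exact ⟨g, by simpa using hgx, by simpa [neg_div] using hgy,
    by simpa [crossRatio] using hg.crossRatio_eq⟩
end

section
/- Let D ⊆ ℝ² be open and let f : D → ℝ³ be a C² isothermic immersion: at every point of D its partial derivatives satisfy ‖f_x‖ = ‖f_y‖ > 0, ⟨f_x, f_y⟩ = 0, and f_xy ∈ span{f_x, f_y}. Then the ℝ³-valued 1-form df* := (f_x/‖f_x‖²) dx − (f_y/‖f_y‖²) dy is closed on D; explicitly, ∂/∂y (f_x/‖f_x‖²) = ∂/∂x (−f_y/‖f_y‖²) at every point of D. -/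
open RealInnerProductSpace

/-!
The map `X ↦ X / ‖X‖²` is the inversion in the unit sphere, whose derivative at `X` is
`‖X‖⁻²` times the reflection in the hyperplane `Xᗮ`. Hence `∂_y (f_x / ‖f_x‖²)` and
`∂_x (f_y / ‖f_y‖²)` are, up to the common factor `‖f_x‖⁻² = ‖f_y‖⁻²`, the reflections of the same
vector `f_xy = f_yx` in `f_xᗮ` and in `f_yᗮ`. Since `f_x ⟂ f_y`, these two reflections are negatives
of each other on `span {f_x, f_y}`, which contains `f_xy`.
-/

section Reflection

variable {𝕜 E : Type*} [RCLike 𝕜] [NormedAddCommGroup E] [InnerProductSpace 𝕜 E]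

theorem reflection_orthogonal_eq_reflection_of_mem_sup {K L : Submodule 𝕜 E}
    [K.HasOrthogonalProjection] [L.HasOrthogonalProjection] (hKL : K ⟂ L) {w : E}
    (hw : w ∈ K ⊔ L) : Kᗮ.reflection w = L.reflection w := by
  obtain ⟨a, ha, b, hb, rfl⟩ := Submodule.mem_sup.1 hw
  calc Kᗮ.reflection (a + b)
      = -a + b := by
        rw [map_add, Submodule.reflection_mem_subspace_orthogonal_precomplement_eq_neg ha,
          Submodule.reflection_mem_subspace_eq_self (hKL.symm hb)]
    _ = L.reflection (a + b) := by
        rw [map_add, Submodule.reflection_mem_subspace_orthogonalComplement_eq_neg (hKL ha),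
          Submodule.reflection_mem_subspace_eq_self hb]

theorem reflection_orthogonal_span_singleton_eq_neg {x y w : E} (hxy : inner 𝕜 x y = 0)
    (hw : w ∈ Submodule.span 𝕜 {x, y}) :
    (𝕜 ∙ x)ᗮ.reflection w = -(𝕜 ∙ y)ᗮ.reflection w := by
  rw [Submodule.span_insert] at hw
  have hortho : (𝕜 ∙ x) ⟂ (𝕜 ∙ y) := by simpa [Submodule.isOrtho_span] using hxy
  rw [reflection_orthogonal_eq_reflection_of_mem_sup hortho hw,
    Submodule.reflection_orthogonal_apply, neg_neg]

end Reflection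

section Derivatives

variable {V F : Type*} [NormedAddCommGroup V] [NormedSpace ℝ V] [NormedAddCommGroup F]

theorem fderiv_fderiv_apply_comm [NormedSpace ℝ F] {f : V → F} {p : V}
    (hf : ∀ᶠ q in nhds p, DifferentiableAt ℝ f q) (hf' : DifferentiableAt ℝ (fderiv ℝ f) p)
    (u v : V) :
    fderiv ℝ (fun q => fderiv ℝ f q u) p v = fderiv ℝ (fun q => fderiv ℝ f q v) p u := by
  have hsymm : fderiv ℝ (fderiv ℝ f) p v u = fderiv ℝ (fderiv ℝ f) p u v :=
    second_derivative_symmetric_of_eventually (hf.mono fun _ h => h.hasFDerivAt)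
      hf'.hasFDerivAt v u
  simpa [fderiv_clm_apply hf' (differentiableAt_const _)] using hsymm

variable [InnerProductSpace ℝ F]

theorem hasFDerivAt_inv_norm_sq_smul {g : V → F} {g' : V →L[ℝ] F} {p : V}
    (hg : HasFDerivAt g g' p) (hgp : g p ≠ 0) :
    HasFDerivAt (fun q => (‖g q‖ ^ 2)⁻¹ • g q)
      ((‖g p‖ ^ 2)⁻¹ • ((ℝ ∙ g p)ᗮ.reflection : F →L[ℝ] F) ∘L g') p := by
  simpa [Function.comp_def, EuclideanGeometry.inversion] using
    (EuclideanGeometry.hasFDerivAt_inversion (R := 1) hgp).comp p hg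

theorem fderiv_inv_norm_sq_smul_eq_fderiv_neg {X Y : V → F} {p u v : V}
    (hX : DifferentiableAt ℝ X p) (hY : DifferentiableAt ℝ Y p)
    (hclosed : fderiv ℝ X p v = fderiv ℝ Y p u) (hX0 : X p ≠ 0) (hnorm : ‖X p‖ = ‖Y p‖)
    (horth : ⟪X p, Y p⟫ = 0) (hspan : fderiv ℝ X p v ∈ Submodule.span ℝ {X p, Y p}) :
    fderiv ℝ (fun q => (‖X q‖ ^ 2)⁻¹ • X q) p v =
      fderiv ℝ (fun q => -((‖Y q‖ ^ 2)⁻¹ • Y q)) p u := by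
  have hY0 : Y p ≠ 0 := norm_ne_zero_iff.1 (hnorm ▸ norm_ne_zero_iff.2 hX0)
  calc fderiv ℝ (fun q => (‖X q‖ ^ 2)⁻¹ • X q) p v
      = (‖X p‖ ^ 2)⁻¹ • (ℝ ∙ X p)ᗮ.reflection (fderiv ℝ X p v) := by
        rw [(hasFDerivAt_inv_norm_sq_smul hX.hasFDerivAt hX0).fderiv]; rfl
    _ = -((‖Y p‖ ^ 2)⁻¹ • (ℝ ∙ Y p)ᗮ.reflection (fderiv ℝ Y p u)) := by
        rw [reflection_orthogonal_span_singleton_eq_neg horth hspan, smul_neg, hnorm, hclosed]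
    _ = fderiv ℝ (fun q => -((‖Y q‖ ^ 2)⁻¹ • Y q)) p u := by
        rw [(hasFDerivAt_inv_norm_sq_smul hY.hasFDerivAt hY0).fun_neg.fderiv]; rfl

theorem christoffel_form_closed_general {f : V → F} {p u v : V}
    (hf : ∀ᶠ q in nhds p, DifferentiableAt ℝ f q) (hf' : DifferentiableAt ℝ (fderiv ℝ f) p)
    {fu fv : V → F} (hfu : ∀ q, fu q = fderiv ℝ f q u) (hfv : ∀ q, fv q = fderiv ℝ f q v)
    (hnorm : ‖fu p‖ = ‖fv p‖) (hpos : 0 < ‖fu p‖) (horth : ⟪fu p, fv p⟫ = 0)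
    (hspan : fderiv ℝ fu p v ∈ Submodule.span ℝ {fu p, fv p}) :
    DifferentiableAt ℝ (fun q => (‖fu q‖ ^ 2)⁻¹ • fu q) p ∧
    DifferentiableAt ℝ (fun q => -((‖fv q‖ ^ 2)⁻¹ • fv q)) p ∧
    fderiv ℝ (fun q => (‖fu q‖ ^ 2)⁻¹ • fu q) p v =
      fderiv ℝ (fun q => -((‖fv q‖ ^ 2)⁻¹ • fv q)) p u := by
  obtain rfl : fu = fun q => fderiv ℝ f q u := funext hfu
  obtain rfl : fv = fun q => fderiv ℝ f q v := funext hfv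
  have hdiff (w : V) : DifferentiableAt ℝ (fun q => fderiv ℝ f q w) p :=
    hf'.clm_apply (differentiableAt_const w)
  have hu0 : fderiv ℝ f p u ≠ 0 := norm_pos_iff.1 hpos
  have hv0 : fderiv ℝ f p v ≠ 0 := norm_pos_iff.1 (hnorm ▸ hpos)
  exact ⟨(hasFDerivAt_inv_norm_sq_smul (hdiff u).hasFDerivAt hu0).differentiableAt,
    (hasFDerivAt_inv_norm_sq_smul (hdiff v).hasFDerivAt hv0).differentiableAt.fun_neg,
    fderiv_inv_norm_sq_smul_eq_fderiv_neg (hdiff u) (hdiff v)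
      (fderiv_fderiv_apply_comm hf hf' u v) hu0 hnorm horth hspan⟩

end Derivatives

/-- **Closedness of the Christoffel dual 1-form.**
Let `D ⊆ ℝ²` be open and `f : D → ℝ³` a `C²` isothermic immersion: with
`f_x p = fderiv ℝ f p (1,0)` and `f_y p = fderiv ℝ f p (0,1)`, at every point
of `D` one has `‖f_x‖ = ‖f_y‖ > 0`, `⟪f_x, f_y⟫ = 0`, and
`f_xy ∈ span {f_x, f_y}`.  Then the `ℝ³`-valued 1-form
`df* = (f_x/‖f_x‖²) dx − (f_y/‖f_y‖²) dy` is closed on `D`: its two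
coefficient maps are differentiable on `D` and
`∂/∂y (f_x/‖f_x‖²) = ∂/∂x (−f_y/‖f_y‖²)` at every point of `D`. -/
theorem christoffel_form_closed
    (D : Set (ℝ × ℝ)) (hD : IsOpen D)
    (f : ℝ × ℝ → EuclideanSpace ℝ (Fin 3))
    (hf : ContDiffOn ℝ 2 f D)
    (fx fy : ℝ × ℝ → EuclideanSpace ℝ (Fin 3))
    (hfx : ∀ p, fx p = fderiv ℝ f p (1, 0))
    (hfy : ∀ p, fy p = fderiv ℝ f p (0, 1))
    (hnorm : ∀ p ∈ D, ‖fx p‖ = ‖fy p‖)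
    (hpos : ∀ p ∈ D, 0 < ‖fx p‖)
    (horth : ∀ p ∈ D, ⟪fx p, fy p⟫ = 0)
    (hspan : ∀ p ∈ D, fderiv ℝ fx p (0, 1) ∈ Submodule.span ℝ {fx p, fy p}) :
    ∀ p ∈ D,
      DifferentiableAt ℝ (fun q => (‖fx q‖ ^ 2)⁻¹ • fx q) p ∧
      DifferentiableAt ℝ (fun q => -((‖fy q‖ ^ 2)⁻¹ • fy q)) p ∧
      fderiv ℝ (fun q => (‖fx q‖ ^ 2)⁻¹ • fx q) p (0, 1) =
        fderiv ℝ (fun q => -((‖fy q‖ ^ 2)⁻¹ • fy q)) p (1, 0) := by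
  intro p hp
  have hfp : ContDiffAt ℝ 2 f p := hf.contDiffAt (hD.mem_nhds hp)
  exact christoffel_form_closed_general
    ((hf.differentiableOn two_ne_zero).eventually_differentiableAt (hD.mem_nhds hp))
    ((hfp.fderiv_right (m := 1) one_add_one_eq_two.le).differentiableAt one_ne_zero) hfx hfy
    (hnorm p hp) (hpos p hp) (horth p hp) (hspan p hp)
end

section
/- Let D ⊆ ℝ² be open and simply connected, and let f : D → ℝ³ be a C² isothermic immersion: at every point of D, ‖f_x‖ = ‖f_y‖ > 0, ⟨f_x, f_y⟩ = 0, and f_xy ∈ span{f_x, f_y}. Then there exists a C¹ map f* : D → ℝ³, unique up to an additive constant, with f*_x = f_x/‖f_x‖² and f*_y = −f_y/‖f_y‖² on D; and f* is again an isothermic immersion: ‖f*_x‖ = ‖f*_y‖ > 0, ⟨f*_x, f*_y⟩ = 0, and f*_xy ∈ span{f*_x, f*_y} at every point of D. -/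
open RealInnerProductSpace

/-!
With `N = ‖f_x‖² = ‖f_y‖²`, the prescribed partial derivatives `A = f_x / N` and `B = -f_y / N` are,
up to sign, the images of `f_x` and `f_y` under inversion in the unit sphere, whose derivative at
`v` is `‖v‖⁻²` times the reflection in `v^⊥`. Hence `A_y` and `B_x` are `N⁻¹` times the images of
`f_xy` under the reflection in `f_x^⊥` and under minus the reflection in `f_y^⊥`. These agree on
`span {f_x, f_y}` because the product of two reflections in orthogonal lines of a plane is `-1`.
So `A dx + B dy` is closed, `f*` is a primitive of it, and `f*_xy = A_y` stays in the span.

Local primitives of a closed form differ by locally constant functions. These are the transition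
functions of a covering space of the simply connected domain `D`, and a section of this covering
glues the local primitives to a global one.
-/

open Filter Set Topology

section Gluing

variable {ι X V : Type*} [TopologicalSpace X] [AddCommGroup V]

/-- The bundle with discrete fiber `V` whose transition function from the chart `U i` to the chart
`U j` is translation by the locally constant difference `h i - h j`. In the chart `U i`, a function
`g : X → V` is represented by `g - h i`. -/
def translationBundleCore [TopologicalSpace V] [DiscreteTopology V] (U : ι → Set X)
    (hU : ∀ i, IsOpen (U i)) (indexAt : X → ι) (hindexAt : ∀ x, x ∈ U (indexAt x)) (h : ι → X → V)
    (hloc : ∀ i j, ∀ x ∈ U i ∩ U j, ∀ᶠ y in 𝓝 x, h i y - h j y = h i x - h j x) :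
    FiberBundleCore ι X V where
  baseSet := U
  isOpen_baseSet := hU
  indexAt := indexAt
  mem_baseSet_at := hindexAt
  coordChange i j x v := v + (h i x - h j x)
  coordChange_self := by simp
  continuousOn_coordChange i j := by
    have hsub : ContinuousOn (fun x ↦ h i x - h j x) (U i ∩ U j) := fun x hx ↦
      (tendsto_nhds_of_eventually_eq (hloc i j x hx)).mono_left nhdsWithin_le_nhds
    exact continuousOn_snd.add (hsub.comp continuousOn_fst fun _ hp ↦ hp.1)
  coordChange_comp := by intros; abel

lemma exists_continuous_section_of_isCoveringMap {E : Type*} [TopologicalSpace E]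
    [SimplyConnectedSpace X] [LocallyPathConnectedSpace X] {π : E → X} (hπ : IsCoveringMap π)
    (e : E) : ∃ s : C(X, E), ∀ x, π (s x) = x := by
  obtain ⟨s, ⟨-, hs⟩, -⟩ := hπ.existsUnique_continuousMap_lifts (.id X) (π e) e rfl
  exact ⟨s, congrFun hs⟩

lemma exists_glue_of_sub_locally_const [SimplyConnectedSpace X] [LocallyPathConnectedSpace X]
    {U : ι → Set X} (hU : ∀ i, IsOpen (U i)) (hcover : ∀ x, ∃ i, x ∈ U i) {h : ι → X → V}
    (hloc : ∀ i j, ∀ x ∈ U i ∩ U j, ∀ᶠ y in 𝓝 x, h i y - h j y = h i x - h j x) :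
    ∃ g : X → V, ∀ i, ∀ x ∈ U i, ∀ᶠ y in 𝓝 x, g y - h i y = g x - h i x := by
  choose indexAt hindexAt using hcover
  let : TopologicalSpace V := ⊥
  have : DiscreteTopology V := ⟨rfl⟩
  let Z := translationBundleCore U hU indexAt hindexAt h hloc
  have hZ : IsCoveringMap Z.proj := FiberBundle.isCoveringMap (E := Z.Fiber)
  obtain ⟨x₀⟩ : Nonempty X := inferInstance
  obtain ⟨s, hs⟩ := exists_continuous_section_of_isCoveringMap hZ ⟨x₀, (0 : V)⟩
  let σ : X → V := fun x ↦ (s x).2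
  let g : X → V := fun x ↦ σ x + h (indexAt x) x
  have hchart (i : ι) (y : X) : (Z.localTriv i (s y)).2 = g y - h i y := by
    change σ y + (h (indexAt (s y).1) (s y).1 - h i (s y).1) = _
    rw [show (s y).1 = y from hs y, ← add_sub_assoc]
  refine ⟨g, fun i x hx ↦ ?_⟩
  have hsource : s x ∈ (Z.localTriv i).source :=
    (Z.mem_localTriv_source i _).2 (by rwa [← hs x] at hx)
  have hcont : ContinuousAt (fun y ↦ (Z.localTriv i (s y)).2) x :=
    (((Z.localTriv i).continuousAt hsource).comp s.continuous.continuousAt).snd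
  simpa only [hchart, ContinuousAt, nhds_discrete, tendsto_pure] using hcont

end Gluing

section Poincare

variable {E F : Type*} [NormedAddCommGroup E] [NormedSpace ℝ E] [NormedAddCommGroup F]
  [NormedSpace ℝ F]

lemma eventually_eq_of_eventually_hasFDerivAt_zero {φ : E → F} {x : E}
    (hφ : ∀ᶠ y in 𝓝 x, HasFDerivAt φ (0 : E →L[ℝ] F) y) : ∀ᶠ y in 𝓝 x, φ y = φ x := by
  obtain ⟨r, hr, hball⟩ := Metric.eventually_nhds_iff_ball.1 hφ
  filter_upwards [Metric.ball_mem_nhds x hr] with y hy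
  exact Metric.isOpen_ball.is_const_of_fderiv_eq_zero (convex_ball x r).isPreconnected
    (fun z hz ↦ (hball z hz).differentiableAt.differentiableWithinAt)
    (fun z hz ↦ (hball z hz).fderiv) hy (Metric.mem_ball_self hr)

variable {D : Set E} {ω : E → E →L[ℝ] F}

lemma exists_primitive_of_locally_exists_primitive (hD : IsOpen D) (hDsc : IsSimplyConnected D)
    (hω : ∀ a ∈ D, ∃ h : E → F, ∀ᶠ b in 𝓝 a, HasFDerivAt h (ω b) b) :
    ∃ g : E → F, ∀ a ∈ D, HasFDerivAt g (ω a) a := by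
  have := hDsc.simplyConnectedSpace
  have := hD.locallyPathConnectedSpace
  have hnhds (x : D) : map Subtype.val (𝓝 x) = 𝓝 (x : E) :=
    hD.isOpenEmbedding_subtypeVal.map_nhds_eq x
  choose! h hh using hω
  let U : D → Set D := fun i ↦ {x | ∀ᶠ b in 𝓝 (x : E), HasFDerivAt (h i) (ω b) b}
  obtain ⟨g, hg⟩ := exists_glue_of_sub_locally_const (U := U) (h := fun i x ↦ h i x)
    (fun i ↦ isOpen_setOfPred_eventually_nhds.preimage continuous_subtype_val)
    (fun x ↦ ⟨x, hh x x.2⟩) (fun i j x hx ↦ by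
      have hconst := eventually_eq_of_eventually_hasFDerivAt_zero (φ := h i - h j) <| by
        filter_upwards [hx.1, hx.2] with b hi hj
        simpa using hi.sub hj
      rwa [← hnhds, eventually_map] at hconst)
  refine ⟨Function.extend Subtype.val g 0, fun a ha ↦ ?_⟩
  have hlocal : HasFDerivAt (fun b ↦ h a b + (g ⟨a, ha⟩ - h a a)) (ω a) a :=
    (hh a ha).self_of_nhds.add_const _
  refine hlocal.congr_of_eventuallyEq ?_
  rw [EventuallyEq, ← hnhds ⟨a, ha⟩, eventually_map]
  filter_upwards [hg ⟨a, ha⟩ ⟨a, ha⟩ (hh a ha)] with y hy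
  rw [Subtype.val_injective.extend_apply, ← hy]
  abel

lemma exists_primitive_of_fderiv_symmetric [CompleteSpace F] (hD : IsOpen D)
    (hDsc : IsSimplyConnected D) (hω : DifferentiableOn ℝ ω D)
    (hsymm : ∀ a ∈ D, ∀ v w, fderiv ℝ ω a v w = fderiv ℝ ω a w v) :
    ∃ g : E → F, ∀ a ∈ D, HasFDerivAt g (ω a) a := by
  refine exists_primitive_of_locally_exists_primitive hD hDsc fun a ha ↦ ?_
  obtain ⟨r, hr, hball⟩ := Metric.isOpen_iff.1 hD a ha
  obtain ⟨h, hh⟩ := (convex_ball a r).exists_forall_hasFDerivAt_of_fderiv_symmetric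
    Metric.isOpen_ball (hω.mono hball) fun b hb ↦ hsymm b (hball hb)
  exact ⟨h, eventually_of_mem (Metric.ball_mem_nhds a hr) hh⟩

end Poincare

section Plane

variable {F : Type*} [NormedAddCommGroup F] [NormedSpace ℝ F]

/-- The partial derivative `f_x` of a map on the plane. -/
noncomputable abbrev partialX (f : ℝ × ℝ → F) (p : ℝ × ℝ) : F := fderiv ℝ f p (1, 0)

/-- The partial derivative `f_y` of a map on the plane. -/
noncomputable abbrev partialY (f : ℝ × ℝ → F) (p : ℝ × ℝ) : F := fderiv ℝ f p (0, 1)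

/-- The vector-valued 1-form `A dx + B dy` on the plane. -/
def planarForm (A B : ℝ × ℝ → F) (p : ℝ × ℝ) : ℝ × ℝ →L[ℝ] F :=
  (ContinuousLinearMap.fst ℝ ℝ ℝ).smulRight (A p) + (ContinuousLinearMap.snd ℝ ℝ ℝ).smulRight (B p)

lemma planarForm_apply (A B : ℝ × ℝ → F) (p v : ℝ × ℝ) :
    planarForm A B p v = v.1 • A p + v.2 • B p := rfl

lemma fderiv_eq_planarForm (f : ℝ × ℝ → F) (p : ℝ × ℝ) :
    fderiv ℝ f p = planarForm (partialX f) (partialY f) p := by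
  ext <;> simp [planarForm_apply]

lemma hasFDerivAt_planarForm {A B : ℝ × ℝ → F} {p : ℝ × ℝ} (hA : DifferentiableAt ℝ A p)
    (hB : DifferentiableAt ℝ B p) :
    HasFDerivAt (planarForm A B)
      ((ContinuousLinearMap.smulRightL ℝ (ℝ × ℝ) F (.fst ℝ ℝ ℝ)).comp (fderiv ℝ A p) +
        (ContinuousLinearMap.smulRightL ℝ (ℝ × ℝ) F (.snd ℝ ℝ ℝ)).comp (fderiv ℝ B p)) p :=
  ((ContinuousLinearMap.smulRightL ℝ (ℝ × ℝ) F (.fst ℝ ℝ ℝ)).hasFDerivAt.comp p hA.hasFDerivAt).add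
    ((ContinuousLinearMap.smulRightL ℝ (ℝ × ℝ) F (.snd ℝ ℝ ℝ)).hasFDerivAt.comp p hB.hasFDerivAt)

lemma fderiv_planarForm_symmetric {A B : ℝ × ℝ → F} {p : ℝ × ℝ} (hA : DifferentiableAt ℝ A p)
    (hB : DifferentiableAt ℝ B p) (hAB : partialY A p = partialX B p) (v w : ℝ × ℝ) :
    fderiv ℝ (planarForm A B) p v w = fderiv ℝ (planarForm A B) p w v := by
  have hfderiv (v w : ℝ × ℝ) : fderiv ℝ (planarForm A B) p v w =
      w.1 • fderiv ℝ A p v + w.2 • fderiv ℝ B p v := by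
    rw [(hasFDerivAt_planarForm hA hB).fderiv]; rfl
  simp only [hfderiv, fderiv_eq_planarForm A, fderiv_eq_planarForm B, planarForm_apply, hAB]
  module

lemma exists_hasFDerivAt_planarForm [CompleteSpace F] {D : Set (ℝ × ℝ)} (hD : IsOpen D)
    (hDsc : IsSimplyConnected D) {A B : ℝ × ℝ → F} (hA : ∀ p ∈ D, DifferentiableAt ℝ A p)
    (hB : ∀ p ∈ D, DifferentiableAt ℝ B p) (hAB : ∀ p ∈ D, partialY A p = partialX B p) :
    ∃ g : ℝ × ℝ → F, ∀ p ∈ D, HasFDerivAt g (planarForm A B p) p :=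
  exists_primitive_of_fderiv_symmetric hD hDsc
    (fun p hp ↦
      (hasFDerivAt_planarForm (hA p hp) (hB p hp)).differentiableAt.differentiableWithinAt)
    fun p hp ↦ fderiv_planarForm_symmetric (hA p hp) (hB p hp) (hAB p hp)

lemma fderiv_fderiv_apply {E : Type*} [NormedAddCommGroup E] [NormedSpace ℝ E] {f : E → F} {p : E}
    (hf : DifferentiableAt ℝ (fderiv ℝ f) p) (v w : E) :
    fderiv ℝ (fun q ↦ fderiv ℝ f q v) p w = fderiv ℝ (fderiv ℝ f) p w v := by
  simp [fderiv_clm_apply hf (differentiableAt_const v)]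

lemma partialX_partialY {f : ℝ × ℝ → F} {p : ℝ × ℝ} (hf : ∀ᶠ q in 𝓝 p, DifferentiableAt ℝ f q)
    (hf' : DifferentiableAt ℝ (fderiv ℝ f) p) :
    partialX (partialY f) p = partialY (partialX f) p := by
  have hsymm := second_derivative_symmetric_of_eventually (hf.mono fun q hq ↦ hq.hasFDerivAt)
    hf'.hasFDerivAt (1, 0) (0, 1)
  rwa [← fderiv_fderiv_apply hf', ← fderiv_fderiv_apply hf'] at hsymm

end Plane

section Inversion

variable {F : Type*} [NormedAddCommGroup F] [InnerProductSpace ℝ F]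

lemma norm_inv_norm_sq_smul (v : F) : ‖(‖v‖ ^ 2)⁻¹ • v‖ = ‖v‖⁻¹ := by
  rcases eq_or_ne v 0 with rfl | hv
  · simp
  · rw [norm_smul, norm_inv, norm_pow, norm_norm]
    field_simp

lemma hasFDerivAt_inv_norm_sq_smul_s5 {v : F} (hv : v ≠ 0) :
    HasFDerivAt (fun w : F ↦ (‖w‖ ^ 2)⁻¹ • w)
      ((‖v‖ ^ 2)⁻¹ • ((ℝ ∙ v)ᗮ.reflection : F →L[ℝ] F)) v := by
  simpa [EuclideanGeometry.inversion_def] using EuclideanGeometry.hasFDerivAt_inversion (R := 1) hv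

lemma fderiv_inv_norm_sq_smul_comp {E : Type*} [NormedAddCommGroup E] [NormedSpace ℝ E]
    {u : E → F} {p : E} (hu : DifferentiableAt ℝ u p) (hup : u p ≠ 0) (v : E) :
    fderiv ℝ (fun q ↦ (‖u q‖ ^ 2)⁻¹ • u q) p v =
      (‖u p‖ ^ 2)⁻¹ • (ℝ ∙ u p)ᗮ.reflection (fderiv ℝ u p v) :=
  congr($(((hasFDerivAt_inv_norm_sq_smul_s5 hup).comp p hu.hasFDerivAt).fderiv) v)

lemma reflection_orthogonal_singleton_mem_span_pair {u v w : F}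
    (hv : v ∈ Submodule.span ℝ {u, w}) :
    (ℝ ∙ u)ᗮ.reflection v ∈ Submodule.span ℝ {u, w} := by
  rw [Submodule.reflection_orthogonal_apply, Submodule.reflection_singleton_apply, neg_sub]
  exact sub_mem hv <| Submodule.smul_of_tower_mem _ _ <| Submodule.smul_mem _ _ <|
    Submodule.mem_span_of_mem (mem_insert u {w})

lemma reflection_orthogonal_eq_neg_of_mem_span_pair {u v w : F} (huw : ⟪u, w⟫ = 0)
    (hv : v ∈ Submodule.span ℝ {u, w}) :
    (ℝ ∙ u)ᗮ.reflection v = -(ℝ ∙ w)ᗮ.reflection v := by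
  obtain ⟨a, b, rfl⟩ := Submodule.mem_span_pair.1 hv
  have hu : (ℝ ∙ w)ᗮ.reflection u = u := Submodule.reflection_mem_subspace_eq_self <|
    Submodule.mem_orthogonal_singleton_iff_inner_left.2 huw
  have hw : (ℝ ∙ u)ᗮ.reflection w = w := Submodule.reflection_mem_subspace_eq_self <|
    Submodule.mem_orthogonal_singleton_iff_inner_right.2 huw
  simp only [map_add, map_smul, hu, hw, Submodule.reflection_orthogonalComplement_singleton_eq_neg]
  module

end Inversion

section Christoffel

variable {F : Type*} [NormedAddCommGroup F] [InnerProductSpace ℝ F] {D : Set (ℝ × ℝ)}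
  {f g g' : ℝ × ℝ → F}

/-- Isothermic immersions of a planar set into a real inner product space: conformally parametrized,
with tangential mixed derivative. Twice differentiable maps are admitted in place of `C²` ones. -/
structure IsIsothermicOn (f : ℝ × ℝ → F) (D : Set (ℝ × ℝ)) : Prop where
  differentiableAt : ∀ p ∈ D, DifferentiableAt ℝ f p
  differentiableAt_fderiv : ∀ p ∈ D, DifferentiableAt ℝ (fderiv ℝ f) p
  norm_eq : ∀ p ∈ D, ‖partialX f p‖ = ‖partialY f p‖
  norm_pos : ∀ p ∈ D, 0 < ‖partialX f p‖
  inner_eq_zero : ∀ p ∈ D, ⟪partialX f p, partialY f p⟫ = 0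
  mixed_mem_span : ∀ p ∈ D,
    partialY (partialX f) p ∈ Submodule.span ℝ {partialX f p, partialY f p}

/-- The prescribed first partial derivative `f_x / ‖f_x‖²` of the Christoffel transform of `f`. -/
noncomputable def christoffelX (f : ℝ × ℝ → F) (p : ℝ × ℝ) : F :=
  (‖partialX f p‖ ^ 2)⁻¹ • partialX f p

/-- The prescribed second partial derivative `-f_y / ‖f_y‖²` of the Christoffel transform of `f`. -/
noncomputable def christoffelY (f : ℝ × ℝ → F) (p : ℝ × ℝ) : F :=
  -((‖partialY f p‖ ^ 2)⁻¹ • partialY f p)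

/-- `g` is a Christoffel transform (dual surface) `f*` of `f` on `D`. Differentiability of `g`
replaces the `C¹` condition: for isothermic `f` the prescribed derivative is continuous. -/
structure IsChristoffelTransformOn (f g : ℝ × ℝ → F) (D : Set (ℝ × ℝ)) : Prop where
  differentiableAt : ∀ p ∈ D, DifferentiableAt ℝ g p
  partialX_eq : ∀ p ∈ D, partialX g p = christoffelX f p
  partialY_eq : ∀ p ∈ D, partialY g p = christoffelY f p

lemma norm_christoffelX (f : ℝ × ℝ → F) (p : ℝ × ℝ) : ‖christoffelX f p‖ = ‖partialX f p‖⁻¹ :=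
  norm_inv_norm_sq_smul _

lemma norm_christoffelY (f : ℝ × ℝ → F) (p : ℝ × ℝ) : ‖christoffelY f p‖ = ‖partialY f p‖⁻¹ := by
  rw [christoffelY, norm_neg, norm_inv_norm_sq_smul]

namespace IsIsothermicOn

lemma partialX_ne_zero (hf : IsIsothermicOn f D) {p : ℝ × ℝ} (hp : p ∈ D) : partialX f p ≠ 0 :=
  norm_pos_iff.1 (hf.norm_pos p hp)

lemma partialY_ne_zero (hf : IsIsothermicOn f D) {p : ℝ × ℝ} (hp : p ∈ D) : partialY f p ≠ 0 :=
  norm_pos_iff.1 (hf.norm_eq p hp ▸ hf.norm_pos p hp)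

lemma differentiableAt_fderiv_apply (hf : IsIsothermicOn f D) {p : ℝ × ℝ} (hp : p ∈ D)
    (v : ℝ × ℝ) : DifferentiableAt ℝ (fun q ↦ fderiv ℝ f q v) p :=
  (hf.differentiableAt_fderiv p hp).clm_apply (differentiableAt_const v)

lemma of_contDiffOn (hD : IsOpen D) (hf : ContDiffOn ℝ 2 f D)
    (hnorm : ∀ p ∈ D, ‖partialX f p‖ = ‖partialY f p‖) (hpos : ∀ p ∈ D, 0 < ‖partialX f p‖)
    (horth : ∀ p ∈ D, ⟪partialX f p, partialY f p⟫ = 0)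
    (hmixed : ∀ p ∈ D,
      partialY (partialX f) p ∈ Submodule.span ℝ {partialX f p, partialY f p}) :
    IsIsothermicOn f D where
  differentiableAt _ hp := (hf.differentiableOn two_ne_zero).differentiableAt (hD.mem_nhds hp)
  differentiableAt_fderiv _ hp :=
    ((hf.fderiv_of_isOpen hD one_add_one_eq_two.le).differentiableOn one_ne_zero).differentiableAt
      (hD.mem_nhds hp)
  norm_eq := hnorm
  norm_pos := hpos
  inner_eq_zero := horth
  mixed_mem_span := hmixed

lemma contDiffOn_one (hf : IsIsothermicOn f D) (hD : IsOpen D) : ContDiffOn ℝ 1 f D := by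
  rw [← zero_add 1, contDiffOn_succ_iff_fderiv_of_isOpen hD, contDiffOn_zero]
  exact ⟨fun p hp ↦ (hf.differentiableAt p hp).differentiableWithinAt, by simp,
    fun p hp ↦ (hf.differentiableAt_fderiv p hp).continuousAt.continuousWithinAt⟩

lemma differentiableAt_christoffelX (hf : IsIsothermicOn f D) {p : ℝ × ℝ} (hp : p ∈ D) :
    DifferentiableAt ℝ (christoffelX f) p :=
  (hasFDerivAt_inv_norm_sq_smul_s5 (hf.partialX_ne_zero hp)).differentiableAt.fun_comp' p
    (hf.differentiableAt_fderiv_apply hp _)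

lemma differentiableAt_christoffelY (hf : IsIsothermicOn f D) {p : ℝ × ℝ} (hp : p ∈ D) :
    DifferentiableAt ℝ (christoffelY f) p :=
  ((hasFDerivAt_inv_norm_sq_smul_s5 (hf.partialY_ne_zero hp)).differentiableAt.fun_comp' p
    (hf.differentiableAt_fderiv_apply hp _)).fun_neg

lemma partialY_christoffelX (hf : IsIsothermicOn f D) {p : ℝ × ℝ} (hp : p ∈ D) :
    partialY (christoffelX f) p =
      (‖partialX f p‖ ^ 2)⁻¹ • (ℝ ∙ partialX f p)ᗮ.reflection (partialY (partialX f) p) :=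
  fderiv_inv_norm_sq_smul_comp (hf.differentiableAt_fderiv_apply hp _) (hf.partialX_ne_zero hp) _

lemma partialX_christoffelY (hf : IsIsothermicOn f D) {p : ℝ × ℝ} (hp : p ∈ D) :
    partialX (christoffelY f) p =
      -((‖partialY f p‖ ^ 2)⁻¹ • (ℝ ∙ partialY f p)ᗮ.reflection (partialX (partialY f) p)) := by
  unfold christoffelY partialX
  rw [fderiv_fun_neg, neg_apply, fderiv_inv_norm_sq_smul_comp
    (hf.differentiableAt_fderiv_apply hp _) (hf.partialY_ne_zero hp)]

lemma partialY_christoffelX_eq_partialX_christoffelY (hf : IsIsothermicOn f D) (hD : IsOpen D)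
    {p : ℝ × ℝ} (hp : p ∈ D) : partialY (christoffelX f) p = partialX (christoffelY f) p := by
  have hmixed : partialX (partialY f) p = partialY (partialX f) p :=
    partialX_partialY ((hD.eventually_mem hp).mono hf.differentiableAt)
      (hf.differentiableAt_fderiv p hp)
  rw [hf.partialY_christoffelX hp, hf.partialX_christoffelY hp, hmixed, hf.norm_eq p hp,
    reflection_orthogonal_eq_neg_of_mem_span_pair (hf.inner_eq_zero p hp) (hf.mixed_mem_span p hp),
    smul_neg]

lemma inner_christoffelX_christoffelY (hf : IsIsothermicOn f D) {p : ℝ × ℝ} (hp : p ∈ D) :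
    ⟪christoffelX f p, christoffelY f p⟫ = 0 := by
  rw [christoffelX, christoffelY, inner_neg_right, real_inner_smul_left, real_inner_smul_right,
    hf.inner_eq_zero p hp, mul_zero, mul_zero, neg_zero]

lemma span_christoffel (hf : IsIsothermicOn f D) {p : ℝ × ℝ} (hp : p ∈ D) :
    Submodule.span ℝ {christoffelX f p, christoffelY f p} =
      Submodule.span ℝ {partialX f p, partialY f p} := by
  have hX : IsUnit (‖partialX f p‖ ^ 2)⁻¹ := by simp [hf.partialX_ne_zero hp]
  have hY : IsUnit (‖partialY f p‖ ^ 2)⁻¹ := by simp [hf.partialY_ne_zero hp]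
  rw [christoffelX, christoffelY, ← neg_smul, Submodule.span_insert, Submodule.span_insert,
    Submodule.span_singleton_smul_eq hX, Submodule.span_singleton_smul_eq hY.neg]

lemma partialY_christoffelX_mem_span (hf : IsIsothermicOn f D) {p : ℝ × ℝ} (hp : p ∈ D) :
    partialY (christoffelX f) p ∈ Submodule.span ℝ {christoffelX f p, christoffelY f p} := by
  rw [hf.span_christoffel hp, hf.partialY_christoffelX hp]
  exact Submodule.smul_mem _ _
    (reflection_orthogonal_singleton_mem_span_pair (hf.mixed_mem_span p hp))

lemma exists_isChristoffelTransformOn [CompleteSpace F] (hf : IsIsothermicOn f D) (hD : IsOpen D)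
    (hDsc : IsSimplyConnected D) : ∃ g, IsChristoffelTransformOn f g D := by
  obtain ⟨g, hg⟩ := exists_hasFDerivAt_planarForm hD hDsc
    (fun _ hp ↦ hf.differentiableAt_christoffelX hp)
    (fun _ hp ↦ hf.differentiableAt_christoffelY hp)
    (fun _ hp ↦ hf.partialY_christoffelX_eq_partialX_christoffelY hD hp)
  refine ⟨g, fun p hp ↦ (hg p hp).differentiableAt, fun p hp ↦ ?_, fun p hp ↦ ?_⟩
  · simp [partialX, (hg p hp).fderiv, planarForm_apply]
  · simp [partialY, (hg p hp).fderiv, planarForm_apply]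

end IsIsothermicOn

namespace IsChristoffelTransformOn

lemma fderiv_eq (hg : IsChristoffelTransformOn f g D) {p : ℝ × ℝ} (hp : p ∈ D) :
    fderiv ℝ g p = planarForm (christoffelX f) (christoffelY f) p := by
  rw [fderiv_eq_planarForm, planarForm, planarForm, hg.partialX_eq p hp, hg.partialY_eq p hp]

lemma exists_eq_add_const (hg : IsChristoffelTransformOn f g D)
    (hg' : IsChristoffelTransformOn f g' D) (hD : IsOpen D) (hDconn : IsPreconnected D) :
    ∃ c, ∀ p ∈ D, g' p = g p + c :=
  hD.exists_eq_add_of_fderiv_eq hDconn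
    (fun p hp ↦ (hg'.differentiableAt p hp).differentiableWithinAt)
    (fun p hp ↦ (hg.differentiableAt p hp).differentiableWithinAt)
    fun _ hp ↦ (hg'.fderiv_eq hp).trans (hg.fderiv_eq hp).symm

lemma differentiableAt_fderiv (hg : IsChristoffelTransformOn f g D) (hf : IsIsothermicOn f D)
    (hD : IsOpen D) {p : ℝ × ℝ} (hp : p ∈ D) : DifferentiableAt ℝ (fderiv ℝ g) p :=
  (hasFDerivAt_planarForm (hf.differentiableAt_christoffelX hp)
    (hf.differentiableAt_christoffelY hp)).differentiableAt.congr_of_eventuallyEq <|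
      (hD.eventually_mem hp).mono fun _ hq ↦ hg.fderiv_eq hq

lemma partialY_partialX (hg : IsChristoffelTransformOn f g D) (hD : IsOpen D) {p : ℝ × ℝ}
    (hp : p ∈ D) : partialY (partialX g) p = partialY (christoffelX f) p :=
  have hX : partialX g =ᶠ[𝓝 p] christoffelX f := (hD.eventually_mem hp).mono hg.partialX_eq
  congr($(hX.fderiv_eq) (0, 1))

lemma isIsothermicOn (hg : IsChristoffelTransformOn f g D) (hf : IsIsothermicOn f D)
    (hD : IsOpen D) : IsIsothermicOn g D where
  differentiableAt := hg.differentiableAt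
  differentiableAt_fderiv p hp := hg.differentiableAt_fderiv hf hD hp
  norm_eq p hp := by
    rw [hg.partialX_eq p hp, hg.partialY_eq p hp, norm_christoffelX, norm_christoffelY,
      hf.norm_eq p hp]
  norm_pos p hp := by
    rw [hg.partialX_eq p hp, norm_christoffelX]
    exact inv_pos.2 (hf.norm_pos p hp)
  inner_eq_zero p hp := by
    rw [hg.partialX_eq p hp, hg.partialY_eq p hp]
    exact hf.inner_christoffelX_christoffelY hp
  mixed_mem_span p hp := by
    rw [hg.partialY_partialX hD hp, hg.partialX_eq p hp, hg.partialY_eq p hp]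
    exact hf.partialY_christoffelX_mem_span hp

end IsChristoffelTransformOn

theorem christoffel_transform_exists_unique_isothermic_general [CompleteSpace F] (hD : IsOpen D)
    (hDsc : IsSimplyConnected D) (hf : IsIsothermicOn f D) :
    ∃ g : ℝ × ℝ → F, IsChristoffelTransformOn f g D ∧
      (∀ g' : ℝ × ℝ → F, IsChristoffelTransformOn f g' D → ∃ c, ∀ p ∈ D, g' p = g p + c) ∧
      IsIsothermicOn g D := by
  obtain ⟨g, hg⟩ := hf.exists_isChristoffelTransformOn hD hDsc
  exact ⟨g, hg, fun g' hg' ↦ hg.exists_eq_add_const hg' hD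
    hDsc.isPathConnected.isConnected.isPreconnected, hg.isIsothermicOn hf hD⟩

end Christoffel

/-- **Existence and uniqueness of the Christoffel transform, and its isothermicity.**
Let `D ⊆ ℝ²` be open and simply connected, and let `f : D → ℝ³` be a `C²`
isothermic immersion (`‖f_x‖ = ‖f_y‖ > 0`, `⟪f_x, f_y⟫ = 0`,
`f_xy ∈ span {f_x, f_y}` on `D`).  Then there is a `C¹` map `f* : D → ℝ³`,
unique up to an additive constant, with `f*_x = f_x/‖f_x‖²` and
`f*_y = −f_y/‖f_y‖²` on `D`; and `f*` is again an isothermic immersion. -/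
theorem christoffel_transform_exists_unique_isothermic
    (D : Set (ℝ × ℝ)) (hD : IsOpen D) (hDsc : SimplyConnectedSpace D)
    (f : ℝ × ℝ → EuclideanSpace ℝ (Fin 3))
    (hf : ContDiffOn ℝ 2 f D)
    (fx fy : ℝ × ℝ → EuclideanSpace ℝ (Fin 3))
    (hfx : ∀ p, fx p = fderiv ℝ f p (1, 0))
    (hfy : ∀ p, fy p = fderiv ℝ f p (0, 1))
    (hnorm : ∀ p ∈ D, ‖fx p‖ = ‖fy p‖)
    (hpos : ∀ p ∈ D, 0 < ‖fx p‖)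
    (horth : ∀ p ∈ D, ⟪fx p, fy p⟫ = 0)
    (hspan : ∀ p ∈ D, fderiv ℝ fx p (0, 1) ∈ Submodule.span ℝ {fx p, fy p}) :
    ∃ g : ℝ × ℝ → EuclideanSpace ℝ (Fin 3),
      -- `g = f*` is `C¹` on `D` with the prescribed partial derivatives
      ContDiffOn ℝ 1 g D ∧
      (∀ p ∈ D, fderiv ℝ g p (1, 0) = (‖fx p‖ ^ 2)⁻¹ • fx p) ∧
      (∀ p ∈ D, fderiv ℝ g p (0, 1) = -((‖fy p‖ ^ 2)⁻¹ • fy p)) ∧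
      -- uniqueness up to an additive constant
      (∀ g' : ℝ × ℝ → EuclideanSpace ℝ (Fin 3),
        ContDiffOn ℝ 1 g' D →
        (∀ p ∈ D, fderiv ℝ g' p (1, 0) = (‖fx p‖ ^ 2)⁻¹ • fx p) →
        (∀ p ∈ D, fderiv ℝ g' p (0, 1) = -((‖fy p‖ ^ 2)⁻¹ • fy p)) →
        ∃ c : EuclideanSpace ℝ (Fin 3), ∀ p ∈ D, g' p = g p + c) ∧
      -- `f*` is again an isothermic immersion
      (∀ p ∈ D, ‖fderiv ℝ g p (1, 0)‖ = ‖fderiv ℝ g p (0, 1)‖) ∧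
      (∀ p ∈ D, 0 < ‖fderiv ℝ g p (1, 0)‖) ∧
      (∀ p ∈ D, ⟪fderiv ℝ g p (1, 0), fderiv ℝ g p (0, 1)⟫ = 0) ∧
      (∀ p ∈ D, fderiv ℝ (fun q => fderiv ℝ g q (1, 0)) p (0, 1) ∈
        Submodule.span ℝ {fderiv ℝ g p (1, 0), fderiv ℝ g p (0, 1)}) := by
  obtain rfl : fx = partialX f := funext hfx
  obtain rfl : fy = partialY f := funext hfy
  obtain ⟨g, hg, huniq, hgiso⟩ := christoffel_transform_exists_unique_isothermic_general hD hDsc <|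
    .of_contDiffOn hD hf hnorm hpos horth hspan
  refine ⟨g, hgiso.contDiffOn_one hD, hg.partialX_eq, hg.partialY_eq, fun g' hg' hX hY ↦ ?_,
    hgiso.norm_eq, hgiso.norm_pos, hgiso.inner_eq_zero, hgiso.mixed_mem_span⟩
  exact huniq g' ⟨fun p hp ↦
    (hg'.differentiableOn one_ne_zero).differentiableAt (hD.mem_nhds hp), hX, hY⟩
end

section
/- Let D ⊆ ℝ² be open, connected and simply connected, and let f : D → ℝ³ be a smooth isothermic immersion (‖f_x‖ = ‖f_y‖ = λ > 0, ⟨f_x, f_y⟩ = 0, f_xy ∈ span{f_x, f_y} on D) with unit normal N = (f_x × f_y)/λ², and let f* : D → ℝ³ be a Christoffel dual of f (f*_x = f_x/λ², f*_y = −f_y/λ²). Suppose f is minimal, i.e. ⟨N_x, f_x⟩ + ⟨N_y, f_y⟩ = 0 on D, and has no umbilic points, i.e. ⟨N_x, f_x⟩ ≠ 0 at every point of D. Then there exist a constant vector c ∈ ℝ³ and a constant ρ ∈ ℝ, ρ ≠ 0, such that f* = c + ρ·N on D; in particular, the dual immersion f* coincides with the Gauss map N of f up to scale and translation. -/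
/-!
Differentiating `⟪N, N⟫ = 1` shows that `dN` is tangential, and `f_xy` being tangential makes the
shape operator diagonal in the frame `f_x, f_y`. Minimality makes its two eigenvalues opposite,
which is exactly the sign change in the definition of the Christoffel dual: `dN = g • df*` with
`g = ⟪N_x, f_x⟫`. Taking exterior derivatives gives `dg ∧ df* = 0`, and since `df*` is injective and
the domain has dimension greater than one, `dg = 0`. Hence `g` is constant, and non-zero as soon as
one point is not umbilic, so `f*` and `g⁻¹ • N` have the same differential.
-/

open RealInnerProductSpace

/-- The cross product on `ℝ³ = EuclideanSpace ℝ (Fin 3)`. -/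
noncomputable def cross3 (u v : EuclideanSpace ℝ (Fin 3)) : EuclideanSpace ℝ (Fin 3) :=
  (WithLp.equiv 2 (Fin 3 → ℝ)).symm
    ![u 1 * v 2 - u 2 * v 1, u 2 * v 0 - u 0 * v 2, u 0 * v 1 - u 1 * v 0]

open Module
open scoped Topology

section OrthogonalFamily

variable {𝕜 E ι : Type*} [RCLike 𝕜] [NormedAddCommGroup E] [InnerProductSpace 𝕜 E] [Fintype ι]

lemma eq_smul_of_forall_inner_eq_zero {v : ι → E} (hne : ∀ i, v i ≠ 0)
    (horth : Pairwise fun i j ↦ inner 𝕜 (v i) (v j) = 0)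
    (hcard : Fintype.card ι = finrank 𝕜 E) {w : E} (i : ι)
    (hw : ∀ j ≠ i, inner 𝕜 (v j) w = 0) :
    w = (inner 𝕜 (v i) w / (‖v i‖ : 𝕜) ^ 2) • v i := by
  have : Nonempty ι := ⟨i⟩
  have hli := linearIndependent_of_ne_zero_of_inner_eq_zero hne horth
  refine InnerProductSpace.ext_inner_left_basis
    (basisOfLinearIndependentOfCardEqFinrank hli hcard) fun j ↦ ?_
  rw [coe_basisOfLinearIndependentOfCardEqFinrank, inner_smul_right]
  obtain rfl | hji := eq_or_ne j i
  · have : (‖v j‖ : 𝕜) ≠ 0 := by simpa using hne j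
    rw [inner_self_eq_norm_sq_to_K]
    field_simp
  · rw [hw j hji, horth hji, mul_zero]

end OrthogonalFamily

section ThreeDimensional

variable {E : Type*} [NormedAddCommGroup E] [InnerProductSpace ℝ E]

lemma eq_smul_of_inner_eq_zero_of_finrank_eq_three (hE : finrank ℝ E = 3) {x y n w : E}
    (hx : x ≠ 0) (hy : y ≠ 0) (hn : n ≠ 0) (hxy : ⟪x, y⟫ = 0) (hnx : ⟪n, x⟫ = 0)
    (hny : ⟪n, y⟫ = 0) (hwy : ⟪w, y⟫ = 0) (hwn : ⟪w, n⟫ = 0) :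
    w = (⟪w, x⟫ / ‖x‖ ^ 2) • x := by
  rw [real_inner_comm] at hwy hwn
  rw [real_inner_comm x w]
  have hyx := inner_eq_zero_symm.mp hxy
  have hxn := inner_eq_zero_symm.mp hnx
  have hyn := inner_eq_zero_symm.mp hny
  refine eq_smul_of_forall_inner_eq_zero (v := ![x, y, n]) ?_ ?_ (by simp [hE]) 0 ?_
  · simp [Fin.forall_fin_succ, hx, hy, hn]
  · simp [Pairwise, Fin.forall_fin_succ, hxy, hyx, hnx, hxn, hny, hyn]
  · simp [Fin.forall_fin_succ, hwy, hwn]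

end ThreeDimensional

lemma map_prod_eq_smul_add_smul {R M L : Type*} [Semiring R] [AddCommMonoid M] [Module R M]
    [FunLike L (R × R) M] [LinearMapClass L R (R × R) M] (φ : L) (v : R × R) :
    φ v = v.1 • φ (1, 0) + v.2 • φ (0, 1) := by
  rw [← map_smul, ← map_smul, ← map_add]
  simp

lemma injective_of_inner_eq_zero {E L : Type*} [NormedAddCommGroup E] [InnerProductSpace ℝ E]
    [FunLike L (ℝ × ℝ) E] [LinearMapClass L ℝ (ℝ × ℝ) E] {φ : L} (hx : φ (1, 0) ≠ 0)
    (hy : φ (0, 1) ≠ 0) (horth : ⟪φ (1, 0), φ (0, 1)⟫ = 0) : Function.Injective φ := by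
  refine (injective_iff_map_eq_zero φ).mpr fun v hv ↦ ?_
  rw [map_prod_eq_smul_add_smul φ v] at hv
  have h1 := congrArg (⟪φ (1, 0), ·⟫) hv
  have h2 := congrArg (⟪φ (0, 1), ·⟫) hv
  rw [real_inner_comm] at horth
  ext
  · simpa [inner_add_right, inner_smul_right, real_inner_comm, horth, hx] using h1
  · simpa [inner_add_right, inner_smul_right, real_inner_comm, horth, hy] using h2

section ParallelDifferentials

variable {V W : Type*} [NormedAddCommGroup V] [NormedSpace ℝ V] [NormedAddCommGroup W]
  [NormedSpace ℝ W] {F G : V → W} {g : V → ℝ} {D : Set V} {p : V}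

/-- Symmetry of the second derivatives of `F` and `G` is `d(dF) = 0` and `d(g • dF) = 0`, whence
`dg ∧ dF = 0`. -/
lemma fderiv_smul_fderiv_comm (hF : ∀ᶠ q in 𝓝 p, DifferentiableAt ℝ F q)
    (hG : ∀ᶠ q in 𝓝 p, DifferentiableAt ℝ G q) (hF' : DifferentiableAt ℝ (fderiv ℝ F) p)
    (hg : DifferentiableAt ℝ g p) (hFG : ∀ᶠ q in 𝓝 p, fderiv ℝ G q = g q • fderiv ℝ F q)
    (v w : V) :
    fderiv ℝ g p v • fderiv ℝ F p w = fderiv ℝ g p w • fderiv ℝ F p v := by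
  have hsymmF := second_derivative_symmetric_of_eventually
    (hF.mono fun _ h ↦ h.hasFDerivAt) hF'.hasFDerivAt v w
  have hG' : ∀ᶠ q in 𝓝 p, HasFDerivAt G (g q • fderiv ℝ F q) q := by
    filter_upwards [hG, hFG] with q hq hFGq using hFGq ▸ hq.hasFDerivAt
  have hsymmG := second_derivative_symmetric_of_eventually hG'
    (hg.hasFDerivAt.smul hF'.hasFDerivAt) v w
  simpa [hsymmF] using hsymmG

lemma fderiv_eq_zero_of_fderiv_eq_smul (hV : 1 < finrank ℝ V)
    (hF : ∀ᶠ q in 𝓝 p, DifferentiableAt ℝ F q) (hG : ∀ᶠ q in 𝓝 p, DifferentiableAt ℝ G q)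
    (hF' : DifferentiableAt ℝ (fderiv ℝ F) p) (hinj : Function.Injective (fderiv ℝ F p))
    (hg : DifferentiableAt ℝ g p) (hFG : ∀ᶠ q in 𝓝 p, fderiv ℝ G q = g q • fderiv ℝ F q) :
    fderiv ℝ g p = 0 := by
  ext v
  obtain rfl | hv := eq_or_ne v 0
  · simp
  obtain ⟨w, hvw⟩ := exists_linearIndependent_pair_of_one_lt_finrank hV hv
  have hcomm : fderiv ℝ F p (fderiv ℝ g p v • w) = fderiv ℝ F p (fderiv ℝ g p w • v) := by
    simpa using fderiv_smul_fderiv_comm hF hG hF' hg hFG v w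
  have hrel : (-fderiv ℝ g p w) • v + fderiv ℝ g p v • w = 0 := by
    rw [hinj hcomm, neg_smul, neg_add_cancel]
  exact (LinearIndependent.pair_iff.mp hvw _ _ hrel).2

lemma exists_eq_const_of_fderiv_eq_smul (hV : 1 < finrank ℝ V) (hD : IsOpen D)
    (hDconn : IsPreconnected D) (hF : DifferentiableOn ℝ F D) (hG : DifferentiableOn ℝ G D)
    (hF' : DifferentiableOn ℝ (fderiv ℝ F) D)
    (hinj : ∀ p ∈ D, Function.Injective (fderiv ℝ F p)) (hg : DifferentiableOn ℝ g D)
    (hFG : ∀ p ∈ D, fderiv ℝ G p = g p • fderiv ℝ F p) :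
    ∃ k, ∀ p ∈ D, g p = k := by
  refine hD.exists_is_const_of_fderiv_eq_zero hDconn hg fun p hp ↦ ?_
  have hmem := hD.mem_nhds hp
  exact fderiv_eq_zero_of_fderiv_eq_smul hV (hF.eventually_differentiableAt hmem)
    (hG.eventually_differentiableAt hmem) (hF'.differentiableAt hmem) (hinj p hp)
    (hg.differentiableAt hmem) (Filter.mem_of_superset hmem hFG)

end ParallelDifferentials

section UnitNormal

variable {V E : Type*} [NormedAddCommGroup V] [NormedSpace ℝ V] [NormedAddCommGroup E]
  [InnerProductSpace ℝ E] {D : Set V} {f N : V → E} {p : V}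

lemma differentiableAt_fderiv_of_contDiffAt_two (hf : ContDiffAt ℝ 2 f p) :
    DifferentiableAt ℝ (fderiv ℝ f) p :=
  (hf.fderiv_right (m := 1) one_add_one_eq_two.le).differentiableAt one_ne_zero

lemma inner_fderiv_left_eq_neg {a b : V → E} {k : ℝ} (h : ∀ᶠ q in 𝓝 p, ⟪a q, b q⟫ = k)
    (ha : DifferentiableAt ℝ a p) (hb : DifferentiableAt ℝ b p) (v : V) :
    ⟪fderiv ℝ a p v, b p⟫ = -⟪a p, fderiv ℝ b p v⟫ := by
  have hzero : fderiv ℝ (fun q ↦ ⟪a q, b q⟫) p = 0 :=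
    (Filter.EventuallyEq.fderiv_eq h).trans (fderiv_const_apply k)
  rw [eq_neg_iff_add_eq_zero, add_comm, ← fderiv_inner_apply ℝ ha hb, hzero, zero_apply]

/-- `N` is a unit normal field along `f` on `D`: for a surface in `ℝ³`, a Gauss map. Smoothness is
not part of the notion. -/
structure IsUnitNormalOn (N f : V → E) (D : Set V) : Prop where
  norm_eq_one : ∀ p ∈ D, ‖N p‖ = 1
  inner_fderiv_eq_zero : ∀ p ∈ D, ∀ v, ⟪N p, fderiv ℝ f p v⟫ = 0

namespace IsUnitNormalOn

lemma ne_zero (h : IsUnitNormalOn N f D) (hp : p ∈ D) : N p ≠ 0 :=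
  norm_ne_zero_iff.mp (h.norm_eq_one p hp ▸ one_ne_zero)

lemma inner_fderiv_self (h : IsUnitNormalOn N f D) (hD : IsOpen D) (hp : p ∈ D)
    (hN : DifferentiableAt ℝ N p) (v : V) : ⟪fderiv ℝ N p v, N p⟫ = 0 := by
  have hconst : ∀ᶠ q in 𝓝 p, ⟪N q, N q⟫ = 1 := by
    filter_upwards [hD.mem_nhds hp] with q hq
    rw [real_inner_self_eq_norm_sq, h.norm_eq_one q hq, one_pow]
  have hskew := inner_fderiv_left_eq_neg hconst hN hN v
  rw [real_inner_comm] at hskew ⊢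
  linarith

lemma inner_fderiv_fderiv (h : IsUnitNormalOn N f D) (hD : IsOpen D) (hp : p ∈ D)
    (hN : DifferentiableAt ℝ N p) (hf : DifferentiableAt ℝ (fderiv ℝ f) p) (v w : V) :
    ⟪fderiv ℝ N p v, fderiv ℝ f p w⟫ = -⟪N p, fderiv ℝ (fun q ↦ fderiv ℝ f q w) p v⟫ := by
  refine inner_fderiv_left_eq_neg (b := fun q ↦ fderiv ℝ f q w) (k := 0) ?_ hN (by fun_prop) v
  filter_upwards [hD.mem_nhds hp] with q hq using h.inner_fderiv_eq_zero q hq w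

lemma inner_fderiv_fderiv_comm (h : IsUnitNormalOn N f D) (hD : IsOpen D) (hp : p ∈ D)
    (hN : DifferentiableAt ℝ N p) (hf : ContDiffAt ℝ 2 f p) (v w : V) :
    ⟪fderiv ℝ N p v, fderiv ℝ f p w⟫ = ⟪fderiv ℝ N p w, fderiv ℝ f p v⟫ := by
  have hf' := differentiableAt_fderiv_of_contDiffAt_two hf
  have hsymm := (hf.isSymmSndFDerivAt (by simp)).eq v w
  rw [h.inner_fderiv_fderiv hD hp hN hf', h.inner_fderiv_fderiv hD hp hN hf',
    fderiv_clm_apply hf' (by fun_prop), fderiv_clm_apply hf' (by fun_prop)]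
  simp [hsymm]

end IsUnitNormalOn

end UnitNormal

section Isothermic

variable {E : Type*} [NormedAddCommGroup E] [InnerProductSpace ℝ E] {D : Set (ℝ × ℝ)}
  {f N fstar : ℝ × ℝ → E} {p : ℝ × ℝ}

/-- `f` is an isothermic immersion on `D`, in conformal curvature-line coordinates: `f_x` and `f_y`
are `fderiv ℝ f p (1, 0)` and `fderiv ℝ f p (0, 1)`. Smoothness is not part of the notion. -/
structure IsIsothermicOn_s6 (f : ℝ × ℝ → E) (D : Set (ℝ × ℝ)) : Prop where
  norm_eq : ∀ p ∈ D, ‖fderiv ℝ f p (1, 0)‖ = ‖fderiv ℝ f p (0, 1)‖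
  norm_pos : ∀ p ∈ D, 0 < ‖fderiv ℝ f p (1, 0)‖
  inner_eq_zero : ∀ p ∈ D, ⟪fderiv ℝ f p (1, 0), fderiv ℝ f p (0, 1)⟫ = 0
  mixed_mem_span : ∀ p ∈ D, fderiv ℝ (fun q ↦ fderiv ℝ f q (1, 0)) p (0, 1) ∈
    Submodule.span ℝ {fderiv ℝ f p (1, 0), fderiv ℝ f p (0, 1)}

/-- `fstar` is a Christoffel dual of `f` on `D`. Its differentiability is part of the notion, since
`fderiv` is zero at points of non-differentiability. -/
structure IsChristoffelDualOn (fstar f : ℝ × ℝ → E) (D : Set (ℝ × ℝ)) : Prop where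
  differentiableAt : ∀ p ∈ D, DifferentiableAt ℝ fstar p
  fderiv_x : ∀ p ∈ D,
    fderiv ℝ fstar p (1, 0) = (‖fderiv ℝ f p (1, 0)‖ ^ 2)⁻¹ • fderiv ℝ f p (1, 0)
  fderiv_y : ∀ p ∈ D,
    fderiv ℝ fstar p (0, 1) = -((‖fderiv ℝ f p (0, 1)‖ ^ 2)⁻¹ • fderiv ℝ f p (0, 1))

namespace IsIsothermicOn_s6

lemma fderiv_x_ne_zero (hf : IsIsothermicOn_s6 f D) (hp : p ∈ D) : fderiv ℝ f p (1, 0) ≠ 0 :=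
  norm_pos_iff.mp (hf.norm_pos p hp)

lemma fderiv_y_ne_zero (hf : IsIsothermicOn_s6 f D) (hp : p ∈ D) : fderiv ℝ f p (0, 1) ≠ 0 :=
  norm_pos_iff.mp (hf.norm_eq p hp ▸ hf.norm_pos p hp)

lemma inner_normal_y_fderiv_x (hf : IsIsothermicOn_s6 f D) (hN : IsUnitNormalOn N f D)
    (hD : IsOpen D) (hp : p ∈ D) (hf' : DifferentiableAt ℝ (fderiv ℝ f) p)
    (hN' : DifferentiableAt ℝ N p) : ⟪fderiv ℝ N p (0, 1), fderiv ℝ f p (1, 0)⟫ = 0 := by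
  obtain ⟨a, b, hab⟩ := Submodule.mem_span_pair.mp (hf.mixed_mem_span p hp)
  rw [hN.inner_fderiv_fderiv hD hp hN' hf', ← hab, ← map_smul, ← map_smul, ← map_add,
    hN.inner_fderiv_eq_zero p hp, neg_zero]

lemma inner_normal_x_fderiv_y (hf : IsIsothermicOn_s6 f D) (hN : IsUnitNormalOn N f D)
    (hD : IsOpen D) (hp : p ∈ D) (hf' : ContDiffAt ℝ 2 f p) (hN' : DifferentiableAt ℝ N p) :
    ⟪fderiv ℝ N p (1, 0), fderiv ℝ f p (0, 1)⟫ = 0 := by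
  rw [hN.inner_fderiv_fderiv_comm hD hp hN' hf']
  exact hf.inner_normal_y_fderiv_x hN hD hp
    (differentiableAt_fderiv_of_contDiffAt_two hf') hN'

lemma fderiv_normal_x (hE : finrank ℝ E = 3) (hf : IsIsothermicOn_s6 f D) (hN : IsUnitNormalOn N f D)
    (hD : IsOpen D) (hp : p ∈ D) (hf' : ContDiffAt ℝ 2 f p) (hN' : DifferentiableAt ℝ N p) :
    fderiv ℝ N p (1, 0) = (⟪fderiv ℝ N p (1, 0), fderiv ℝ f p (1, 0)⟫ /
      ‖fderiv ℝ f p (1, 0)‖ ^ 2) • fderiv ℝ f p (1, 0) :=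
  eq_smul_of_inner_eq_zero_of_finrank_eq_three hE (hf.fderiv_x_ne_zero hp)
    (hf.fderiv_y_ne_zero hp) (hN.ne_zero hp) (hf.inner_eq_zero p hp)
    (hN.inner_fderiv_eq_zero p hp _) (hN.inner_fderiv_eq_zero p hp _)
    (hf.inner_normal_x_fderiv_y hN hD hp hf' hN') (hN.inner_fderiv_self hD hp hN' _)

lemma fderiv_normal_y (hE : finrank ℝ E = 3) (hf : IsIsothermicOn_s6 f D) (hN : IsUnitNormalOn N f D)
    (hD : IsOpen D) (hp : p ∈ D) (hf' : DifferentiableAt ℝ (fderiv ℝ f) p)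
    (hN' : DifferentiableAt ℝ N p) :
    fderiv ℝ N p (0, 1) = (⟪fderiv ℝ N p (0, 1), fderiv ℝ f p (0, 1)⟫ /
      ‖fderiv ℝ f p (0, 1)‖ ^ 2) • fderiv ℝ f p (0, 1) :=
  eq_smul_of_inner_eq_zero_of_finrank_eq_three hE (hf.fderiv_y_ne_zero hp)
    (hf.fderiv_x_ne_zero hp) (hN.ne_zero hp) (inner_eq_zero_symm.mp (hf.inner_eq_zero p hp))
    (hN.inner_fderiv_eq_zero p hp _) (hN.inner_fderiv_eq_zero p hp _)
    (hf.inner_normal_y_fderiv_x hN hD hp hf' hN') (hN.inner_fderiv_self hD hp hN' _)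

end IsIsothermicOn_s6

namespace IsChristoffelDualOn

lemma differentiableOn (hstar : IsChristoffelDualOn fstar f D) : DifferentiableOn ℝ fstar D :=
  fun p hp ↦ (hstar.differentiableAt p hp).differentiableWithinAt

lemma fderiv_normal_eq_smul (hE : finrank ℝ E = 3) (hstar : IsChristoffelDualOn fstar f D)
    (hf : IsIsothermicOn_s6 f D) (hN : IsUnitNormalOn N f D) (hD : IsOpen D) (hp : p ∈ D)
    (hf' : ContDiffAt ℝ 2 f p) (hN' : DifferentiableAt ℝ N p)
    (hmin : ⟪fderiv ℝ N p (1, 0), fderiv ℝ f p (1, 0)⟫ +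
      ⟪fderiv ℝ N p (0, 1), fderiv ℝ f p (0, 1)⟫ = 0) :
    fderiv ℝ N p = ⟪fderiv ℝ N p (1, 0), fderiv ℝ f p (1, 0)⟫ • fderiv ℝ fstar p := by
  have hx := hf.fderiv_normal_x hE hN hD hp hf' hN'
  have hy := hf.fderiv_normal_y hE hN hD hp (differentiableAt_fderiv_of_contDiffAt_two hf') hN'
  rw [eq_neg_of_add_eq_zero_right hmin] at hy
  refine ContinuousLinearMap.ext fun v ↦ ?_
  rw [smul_apply, map_prod_eq_smul_add_smul (fderiv ℝ N p),
    map_prod_eq_smul_add_smul (fderiv ℝ fstar p), hstar.fderiv_x p hp, hstar.fderiv_y p hp]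
  nth_rw 1 [hx, hy]
  module

lemma fderiv_injective (hstar : IsChristoffelDualOn fstar f D) (hf : IsIsothermicOn_s6 f D)
    (hp : p ∈ D) : Function.Injective (fderiv ℝ fstar p) := by
  refine injective_of_inner_eq_zero ?_ ?_ ?_
  · simpa [hstar.fderiv_x p hp] using hf.fderiv_x_ne_zero hp
  · simpa [hstar.fderiv_y p hp] using hf.fderiv_y_ne_zero hp
  · simp [hstar.fderiv_x p hp, hstar.fderiv_y p hp, inner_smul_left, inner_smul_right,
      hf.inner_eq_zero p hp]

lemma differentiableOn_fderiv (hstar : IsChristoffelDualOn fstar f D) (hf : IsIsothermicOn_s6 f D)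
    (hD : IsOpen D) (hf' : ContDiffOn ℝ 2 f D) : DifferentiableOn ℝ (fderiv ℝ fstar) D := by
  have hdf : ContDiffOn ℝ 1 (fderiv ℝ f) D := hf'.fderiv_of_isOpen hD one_add_one_eq_two.le
  have hpartial (v : ℝ × ℝ) (hv : ∀ p ∈ D, fderiv ℝ f p v ≠ 0) :
      ContDiffOn ℝ 1 (fun p ↦ (‖fderiv ℝ f p v‖ ^ 2)⁻¹ • fderiv ℝ f p v) D := by
    have hdfv := hdf.clm_apply (contDiffOn_const (c := v))
    exact ((hdfv.norm_sq ℝ).inv fun p hp ↦ by simpa using hv p hp).smul hdfv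
  refine (contDiffOn_clm_apply.mpr fun v ↦ ?_).differentiableOn one_ne_zero
  refine (((hpartial (1, 0) fun p ↦ hf.fderiv_x_ne_zero).const_smul v.1).add
    ((hpartial (0, 1) fun p ↦ hf.fderiv_y_ne_zero).neg.const_smul v.2)).congr fun p hp ↦ ?_
  rw [map_prod_eq_smul_add_smul (fderiv ℝ fstar p), hstar.fderiv_x p hp, hstar.fderiv_y p hp]

end IsChristoffelDualOn

theorem christoffel_dual_of_minimal_is_gauss_map_general (hE : finrank ℝ E = 3) (hD : IsOpen D)
    (hDconn : IsPreconnected D) (hf : IsIsothermicOn_s6 f D) (hf' : ContDiffOn ℝ 2 f D)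
    (hN : IsUnitNormalOn N f D) (hN' : ContDiffOn ℝ 2 N D)
    (hstar : IsChristoffelDualOn fstar f D)
    (hmin : ∀ p ∈ D, ⟪fderiv ℝ N p (1, 0), fderiv ℝ f p (1, 0)⟫ +
      ⟪fderiv ℝ N p (0, 1), fderiv ℝ f p (0, 1)⟫ = 0)
    (humb : ∃ p ∈ D, ⟪fderiv ℝ N p (1, 0), fderiv ℝ f p (1, 0)⟫ ≠ 0) :
    ∃ (c : E) (ρ : ℝ), ρ ≠ 0 ∧ ∀ p ∈ D, fstar p = c + ρ • N p := by
  have hNd : DifferentiableOn ℝ N D := hN'.differentiableOn two_ne_zero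
  have hdN (p) (hp : p ∈ D) := hstar.fderiv_normal_eq_smul hE hf hN hD hp
    (hf'.contDiffAt (hD.mem_nhds hp)) (hNd.differentiableAt (hD.mem_nhds hp)) (hmin p hp)
  have hdiff {F : ℝ × ℝ → E} (hF : ContDiffOn ℝ 2 F D) : DifferentiableOn ℝ (fderiv ℝ F) D :=
    (hF.fderiv_of_isOpen hD one_add_one_eq_two.le).differentiableOn one_ne_zero
  have hg : DifferentiableOn ℝ (fun p ↦ ⟪fderiv ℝ N p (1, 0), fderiv ℝ f p (1, 0)⟫) D :=
    ((hdiff hN').clm_apply (differentiableOn_const _)).inner ℝ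
      ((hdiff hf').clm_apply (differentiableOn_const _))
  obtain ⟨k, hk⟩ := exists_eq_const_of_fderiv_eq_smul (by simp) hD hDconn hstar.differentiableOn
    hNd (hstar.differentiableOn_fderiv hf hD hf') (fun p ↦ hstar.fderiv_injective hf) hg hdN
  obtain ⟨p, hp, hne⟩ := humb
  have hk0 : k ≠ 0 := hk p hp ▸ hne
  obtain ⟨c, hc⟩ := hD.exists_eq_add_of_fderiv_eq hDconn hstar.differentiableOn
    (hNd.const_smul k⁻¹) fun p hp ↦ by
      rw [fderiv_const_smul (hNd.differentiableAt (hD.mem_nhds hp)), hdN p hp, hk p hp,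
        inv_smul_smul₀ hk0]
  exact ⟨c, k⁻¹, inv_ne_zero hk0, fun p hp ↦ (hc hp).trans (add_comm _ _)⟩

end Isothermic

section CrossProduct

open Matrix

variable {V : Type*} [NormedAddCommGroup V] [NormedSpace ℝ V]

lemma cross3_eq_toLp_crossProduct (u v : EuclideanSpace ℝ (Fin 3)) :
    cross3 u v = WithLp.toLp 2 (u.ofLp ⨯₃ v.ofLp) := by
  rw [cross_apply]
  rfl

lemma inner_cross3_left (u v : EuclideanSpace ℝ (Fin 3)) : ⟪cross3 u v, u⟫ = 0 := by
  rw [cross3_eq_toLp_crossProduct]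
  exact dot_self_cross u.ofLp v.ofLp

lemma inner_cross3_right (u v : EuclideanSpace ℝ (Fin 3)) : ⟪cross3 u v, v⟫ = 0 := by
  rw [cross3_eq_toLp_crossProduct]
  exact dot_cross_self u.ofLp v.ofLp

lemma norm_cross3_of_inner_eq_zero {u v : EuclideanSpace ℝ (Fin 3)} (h : ⟪u, v⟫ = 0) :
    ‖cross3 u v‖ = ‖u‖ * ‖v‖ := by
  rw [cross3_eq_toLp_crossProduct, InnerProductGeometry.norm_ofLp_crossProduct,
    InnerProductGeometry.inner_eq_zero_iff_angle_eq_pi_div_two u v |>.mp h, Real.sin_pi_div_two,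
    mul_one]

lemma contDiffOn_cross3 {D : Set V} {a b : V → EuclideanSpace ℝ (Fin 3)} {n : WithTop ℕ∞}
    (ha : ContDiffOn ℝ n a D) (hb : ContDiffOn ℝ n b D) :
    ContDiffOn ℝ n (fun p ↦ cross3 (a p) (b p)) D := by
  rw [contDiffOn_euclidean] at ha hb ⊢
  have hmul (i j : Fin 3) := (ha i).mul (hb j)
  intro i
  fin_cases i
  · exact (hmul 1 2).sub (hmul 2 1)
  · exact (hmul 2 0).sub (hmul 0 2)
  · exact (hmul 0 1).sub (hmul 1 0)

end CrossProduct

namespace IsIsothermicOn_s6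

variable {D : Set (ℝ × ℝ)} {f N : ℝ × ℝ → EuclideanSpace ℝ (Fin 3)}

lemma isUnitNormalOn (hf : IsIsothermicOn_s6 f D) (hN : ∀ p ∈ D, N p =
      (‖fderiv ℝ f p (1, 0)‖ ^ 2)⁻¹ • cross3 (fderiv ℝ f p (1, 0)) (fderiv ℝ f p (0, 1))) :
    IsUnitNormalOn N f D where
  norm_eq_one p hp := by
    have hpos := hf.norm_pos p hp
    rw [hN p hp, norm_smul, norm_cross3_of_inner_eq_zero (hf.inner_eq_zero p hp),
      ← hf.norm_eq p hp, ← sq, norm_inv, norm_pow, norm_norm, inv_mul_cancel₀ (by positivity)]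
  inner_fderiv_eq_zero p hp v := by
    rw [hN p hp, map_prod_eq_smul_add_smul (fderiv ℝ f p) v]
    simp [inner_add_right, inner_smul_left, inner_smul_right, inner_cross3_left,
      inner_cross3_right]

lemma contDiffOn_normal {n : WithTop ℕ∞} (hf : IsIsothermicOn_s6 f D) (hD : IsOpen D)
    (hf' : ContDiffOn ℝ (n + 1) f D) (hN : ∀ p ∈ D, N p =
      (‖fderiv ℝ f p (1, 0)‖ ^ 2)⁻¹ • cross3 (fderiv ℝ f p (1, 0)) (fderiv ℝ f p (0, 1))) :
    ContDiffOn ℝ n N D := by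
  have hpartial (v : ℝ × ℝ) : ContDiffOn ℝ n (fun p ↦ fderiv ℝ f p v) D :=
    (hf'.fderiv_of_isOpen hD le_rfl).clm_apply contDiffOn_const
  have hinv : ContDiffOn ℝ n (fun p ↦ (‖fderiv ℝ f p (1, 0)‖ ^ 2)⁻¹) D :=
    ((hpartial (1, 0)).norm_sq ℝ).inv fun p hp ↦ pow_ne_zero 2 (hf.norm_pos p hp).ne'
  exact (hinv.smul (contDiffOn_cross3 (hpartial (1, 0)) (hpartial (0, 1)))).congr hN

end IsIsothermicOn_s6

/-- **The Christoffel dual of a minimal isothermic immersion is its Gauss map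
(up to scale and translation).**
Let `D ⊆ ℝ²` be open, connected and simply connected, `f : D → ℝ³` a smooth
isothermic immersion with unit normal `N = (f_x × f_y)/λ²` (where
`λ = ‖f_x‖ = ‖f_y‖ > 0`), and `f*` a Christoffel dual (`f*_x = f_x/λ²`,
`f*_y = −f_y/λ²`).  If `f` is minimal (`⟪N_x,f_x⟫ + ⟪N_y,f_y⟫ = 0`) and has
no umbilic points (`⟪N_x,f_x⟫ ≠ 0`), then `f* = c + ρ • N` for some constant
vector `c` and constant `ρ ≠ 0`. -/
theorem christoffel_dual_of_minimal_is_gauss_map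
    (D : Set (ℝ × ℝ)) (hD : IsOpen D) (hDconn : IsConnected D)
    (hDsc : SimplyConnectedSpace D)
    (f : ℝ × ℝ → EuclideanSpace ℝ (Fin 3))
    (hf : ContDiffOn ℝ (⊤ : ℕ∞) f D)
    (fx fy : ℝ × ℝ → EuclideanSpace ℝ (Fin 3))
    (hfx : ∀ p, fx p = fderiv ℝ f p (1, 0))
    (hfy : ∀ p, fy p = fderiv ℝ f p (0, 1))
    (hnorm : ∀ p ∈ D, ‖fx p‖ = ‖fy p‖)
    (hpos : ∀ p ∈ D, 0 < ‖fx p‖)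
    (horth : ∀ p ∈ D, ⟪fx p, fy p⟫ = 0)
    (hspan : ∀ p ∈ D, fderiv ℝ fx p (0, 1) ∈ Submodule.span ℝ {fx p, fy p})
    -- the unit normal `N = (f_x × f_y)/λ²`
    (N : ℝ × ℝ → EuclideanSpace ℝ (Fin 3))
    (hN : ∀ p ∈ D, N p = (‖fx p‖ ^ 2)⁻¹ • cross3 (fx p) (fy p))
    -- `f*` is a Christoffel dual of `f`
    (fstar : ℝ × ℝ → EuclideanSpace ℝ (Fin 3))
    (hstardiff : ∀ p ∈ D, DifferentiableAt ℝ fstar p)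
    (hstarx : ∀ p ∈ D, fderiv ℝ fstar p (1, 0) = (‖fx p‖ ^ 2)⁻¹ • fx p)
    (hstary : ∀ p ∈ D, fderiv ℝ fstar p (0, 1) = -((‖fy p‖ ^ 2)⁻¹ • fy p))
    -- `f` is minimal
    (hmin : ∀ p ∈ D, ⟪fderiv ℝ N p (1, 0), fx p⟫ + ⟪fderiv ℝ N p (0, 1), fy p⟫ = 0)
    -- `f` has no umbilic points
    (humb : ∀ p ∈ D, ⟪fderiv ℝ N p (1, 0), fx p⟫ ≠ 0) :
    ∃ (c : EuclideanSpace ℝ (Fin 3)) (ρ : ℝ), ρ ≠ 0 ∧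
      ∀ p ∈ D, fstar p = c + ρ • N p := by
  obtain rfl : fx = fun p ↦ fderiv ℝ f p (1, 0) := funext hfx
  obtain rfl : fy = fun p ↦ fderiv ℝ f p (0, 1) := funext hfy
  obtain ⟨p, hp⟩ := hDconn.nonempty
  have hiso : IsIsothermicOn_s6 f D := ⟨hnorm, hpos, horth, hspan⟩
  have hf3 : ContDiffOn ℝ (2 + 1) f D := hf.of_le (WithTop.coe_le_coe.mpr (le_top (α := ℕ∞)))
  exact christoffel_dual_of_minimal_is_gauss_map_general finrank_euclideanSpace_fin hD
    hDconn.isPreconnected hiso (hf.of_le ENat.LEInfty.out) (hiso.isUnitNormalOn hN)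
    (hiso.contDiffOn_normal hD hf3 hN) ⟨hstardiff, hstarx, hstary⟩ hmin
    ⟨p, hp, humb p hp⟩
end

section
/- (Touching Coins Lemma) Let C₁, C₂, C₃, C₄ be circles in ℝ³, where Cᵢ = {x ∈ ℝ³ : ‖x − cᵢ‖ = ρᵢ, ⟨x − cᵢ, nᵢ⟩ = 0} with center cᵢ ∈ ℝ³, radius ρᵢ > 0 and unit normal nᵢ. Suppose the circles touch cyclically: for each i (indices mod 4) there is a point pᵢ with Cᵢ ∩ Cᵢ₊₁ = {pᵢ}, and at pᵢ the two circles have a common tangent line, i.e. the tangent vectors nᵢ × (pᵢ − cᵢ) and nᵢ₊₁ × (pᵢ − cᵢ₊₁) are parallel. Suppose further that the four contact points p₁, p₂, p₃, p₄ are not coplanar, and that the four circles do not all lie on one common sphere. Let S be the (unique) sphere with center O passing through p₁, p₂, p₃, p₄. Then each circle intersects S orthogonally: for each i, the tangent vector nᵢ × (pᵢ − cᵢ) of Cᵢ at pᵢ is parallel to the radius vector pᵢ − O, and likewise the tangent vector nᵢ₊₁ × (pᵢ − cᵢ₊₁) of Cᵢ₊₁ at pᵢ is parallel to pᵢ − O.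 -/
/-!
The reflection in the perpendicular bisector of two points of a circle preserves the circle, hence
exchanges the tangent lines at these points. For consecutive contact points, these bisectors pass
through `O`; so, going around the cycle, the reflections carry the tangent lines into each other and
preserve the inner product of a tangent vector with the radius vector `p i - O`.

If some tangent line is orthogonal to its radius vector, then all are. A circle which is tangent to
`S` at one point and meets it at another lies on `S`, so all circles lie on `S`, which is excluded.

Otherwise there is a unique tangent vector `u i` at `p i` with `⟪p i - O, u i⟫ = 1`, and the
reflections carry these vectors into each other *without signs*. Thus
`u (i + 1) = u i - l i • (p (i + 1) - p i)`, and the increments sum to zero around the cycle. As the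
`p i` are affinely independent, all `l i` equal one number `l`. Then `u i + l • (p i - O)` is
independent of `i` and has the same inner product with all `p i - O`, so it vanishes because the
`p i` span the space: `u i` is radial.
-/

open RealInnerProductSpace

open Module Submodule

section Reflection

variable {E : Type*} [NormedAddCommGroup E] [InnerProductSpace ℝ E]

/-- The linear part of the reflection in the perpendicular bisector of the points `a` and `b`.
It is the identity if `a = b`. -/
noncomputable def bisectorReflection (a b : E) : E ≃ₗᵢ[ℝ] E :=
  (ℝ ∙ (a - b))ᗮ.reflection

lemma bisectorReflection_sub {a b o : E} (h : ‖a - o‖ = ‖b - o‖) :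
    bisectorReflection a b (a - o) = b - o := by
  simpa [bisectorReflection] using reflection_sub h

lemma exists_bisectorReflection_eq_sub_smul (a b v : E) :
    ∃ l : ℝ, bisectorReflection a b v = v - l • (b - a) := by
  refine ⟨-(2 * (⟪a - b, v⟫ / ‖a - b‖ ^ 2)), ?_⟩
  rw [bisectorReflection, reflection_orthogonal_apply, reflection_singleton_apply,
    RCLike.ofReal_real_eq_id, id]
  module

lemma inner_sub_bisectorReflection {a b o : E} (h : ‖a - o‖ = ‖b - o‖) (v : E) :
    ⟪b - o, bisectorReflection a b v⟫ = ⟪a - o, v⟫ := by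
  rw [← bisectorReflection_sub h, LinearIsometryEquiv.inner_map_map]

end Reflection

section Subsphere

variable {E : Type*} [NormedAddCommGroup E] [InnerProductSpace ℝ E]
  {V : Submodule ℝ E} {c p q O v : E} {ρ R : ℝ}

/-- The sphere with center `c` and radius `ρ` in the affine subspace `c + V`. It is a circle if `V`
is two-dimensional. -/
def subsphere (V : Submodule ℝ E) (c : E) (ρ : ℝ) : Set E :=
  {x | ‖x - c‖ = ρ ∧ x - c ∈ V}

lemma subsphere_orthogonal_singleton (n c : E) (ρ : ℝ) :
    subsphere (ℝ ∙ n)ᗮ c ρ = {x | ‖x - c‖ = ρ ∧ ⟪x - c, n⟫ = 0} := by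
  simp only [subsphere, mem_orthogonal_singleton_iff_inner_left]

/-- The direction of the tangent space at `p` of the sphere in `c + V` with center `c` through
`p`. -/
noncomputable def tangentDirection (V : Submodule ℝ E) (c p : E) : Submodule ℝ E :=
  (ℝ ∙ (p - c))ᗮ ⊓ V

lemma mem_tangentDirection : v ∈ tangentDirection V c p ↔ ⟪p - c, v⟫ = 0 ∧ v ∈ V := by
  rw [tangentDirection, mem_inf, mem_orthogonal_singleton_iff_inner_right]

lemma ne_center_of_mem_subsphere (hρ : 0 < ρ) (hp : p ∈ subsphere V c ρ) : p ≠ c := by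
  rintro rfl
  simp [subsphere, hρ.ne] at hp

lemma finrank_tangentDirection {d : ℕ} (hV : finrank ℝ V = d + 1) (hpc : p ≠ c)
    (hp : p - c ∈ V) : finrank ℝ (tangentDirection V c p) = d := by
  have : FiniteDimensional ℝ V := .of_finrank_pos (by lia)
  refine finrank_add_inf_finrank_orthogonal' ((span_singleton_le_iff_mem _ _).2 hp) ?_
  rw [finrank_span_singleton (sub_ne_zero.2 hpc), hV, add_comm]

lemma span_radius_sup_tangentDirection (hp : p - c ∈ V) :
    (ℝ ∙ (p - c)) ⊔ tangentDirection V c p = V :=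
  sup_orthogonal_inf_of_hasOrthogonalProjection ((span_singleton_le_iff_mem _ _).2 hp)

lemma bisectorReflection_mem_tangentDirection (hp : p ∈ subsphere V c ρ)
    (hq : q ∈ subsphere V c ρ) (hv : v ∈ tangentDirection V c p) :
    bisectorReflection p q v ∈ tangentDirection V c q := by
  rw [mem_tangentDirection] at hv ⊢
  refine ⟨by rw [inner_sub_bisectorReflection (hp.1.trans hq.1.symm), hv.1], ?_⟩
  obtain ⟨l, hl⟩ := exists_bisectorReflection_eq_sub_smul p q v
  have hqp : q - p ∈ V := sub_sub_sub_cancel_right q p c ▸ V.sub_mem hq.2 hp.2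
  exact hl ▸ V.sub_mem hv.2 (V.smul_mem l hqp)

lemma norm_sub_sq_of_mem_subsphere (hp : p ∈ subsphere V c ρ) (O : E) :
    ‖p - O‖ ^ 2 = ρ ^ 2 + 2 * ⟪p - c, c - O⟫ + ‖c - O‖ ^ 2 := by
  rw [← sub_add_sub_cancel p c O, norm_add_sq_real, hp.1]

lemma inner_radius_chord_ne_zero (hp : p ∈ subsphere V c ρ) (hq : q ∈ subsphere V c ρ)
    (hpq : p ≠ q) : ⟪p - c, q - p⟫ ≠ 0 := by
  have hsq : ‖q - c‖ ^ 2 = ‖q - p‖ ^ 2 + 2 * ⟪p - c, q - p⟫ + ‖p - c‖ ^ 2 := by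
    rw [← sub_add_sub_cancel q p c, norm_add_sq_real, real_inner_comm]
  have hchord : 0 < ‖q - p‖ := norm_sub_pos_iff.2 hpq.symm
  rw [hq.1, hp.1] at hsq
  nlinarith

/-- The chord `q - p` is not tangent at `p`, so it spans `V` together with the tangent vectors at
`p`. All of these are orthogonal to `c - O`. -/
lemma center_sub_mem_orthogonal (hp : p ∈ subsphere V c ρ) (hq : q ∈ subsphere V c ρ)
    (hpq : p ≠ q) (hO : ‖p - O‖ = ‖q - O‖) (ht : tangentDirection V c p ≤ (ℝ ∙ (p - O))ᗮ) :
    c - O ∈ Vᗮ := by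
  have htangent : ∀ t ∈ tangentDirection V c p, ⟪t, c - O⟫ = 0 := fun t ht' => by
    rw [← sub_sub_sub_cancel_left O c p, inner_sub_right,
      mem_orthogonal_singleton_iff_inner_left.1 (ht ht'), real_inner_comm,
      (mem_tangentDirection.1 ht').1, sub_zero]
  have hchord : ⟪q - p, c - O⟫ = 0 := by
    have hsq : ‖p - O‖ ^ 2 = ‖q - O‖ ^ 2 := by rw [hO]
    rw [norm_sub_sq_of_mem_subsphere hp, norm_sub_sq_of_mem_subsphere hq] at hsq
    rw [← sub_sub_sub_cancel_right q p c, inner_sub_left]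
    linarith
  have hradius : ⟪p - c, c - O⟫ = 0 := by
    have hqp : q - p ∈ V := sub_sub_sub_cancel_right q p c ▸ V.sub_mem hq.2 hp.2
    rw [← span_radius_sup_tangentDirection hp.2, mem_sup] at hqp
    obtain ⟨r, hr, t, ht', hrt⟩ := hqp
    obtain ⟨s, rfl⟩ := mem_span_singleton.1 hr
    have hs : s ≠ 0 := by
      rintro rfl
      apply inner_radius_chord_ne_zero hp hq hpq
      rw [← hrt, zero_smul, zero_add, (mem_tangentDirection.1 ht').1]
    rw [← hrt, inner_add_left, htangent t ht', real_inner_smul_left, add_zero] at hchord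
    exact (mul_eq_zero.1 hchord).resolve_left hs
  rw [← span_radius_sup_tangentDirection hp.2, ← inf_orthogonal, mem_inf]
  exact ⟨mem_orthogonal_singleton_iff_inner_right.2 hradius, htangent⟩

lemma subsphere_subset_sphere (hp : p ∈ subsphere V c ρ) (hq : q ∈ subsphere V c ρ)
    (hpq : p ≠ q) (hpO : ‖p - O‖ = R) (hqO : ‖q - O‖ = R)
    (ht : tangentDirection V c p ≤ (ℝ ∙ (p - O))ᗮ) :
    subsphere V c ρ ⊆ {x | ‖x - O‖ = R} := by
  have hO := center_sub_mem_orthogonal hp hq hpq (hpO.trans hqO.symm) ht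
  intro x hx
  rw [Set.mem_ofPred_eq, ← hpO, ← sq_eq_sq₀ (norm_nonneg _) (norm_nonneg _),
    norm_sub_sq_of_mem_subsphere hx, norm_sub_sq_of_mem_subsphere hp, hO _ hx.2, hO _ hp.2]

end Subsphere

section Cycle

variable {E : Type*} [NormedAddCommGroup E] [InnerProductSpace ℝ E] {m : ℕ} [NeZero m]

lemma zmod_forall_of_add_one {P : ZMod m → Prop} {j : ZMod m} (hj : P j)
    (h : ∀ i, P i → P (i + 1)) (i : ZMod m) : P i := by
  suffices ∀ k : ℕ, P (j + k) by simpa using this (i - j).val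
  intro k
  induction k with
  | zero => simpa using hj
  | succ k ih => simpa [add_assoc] using h _ ih

lemma eq_of_sum_smul_sub_eq_zero {p : ZMod m → E} (hp : AffineIndependent ℝ p)
    {l : ZMod m → ℝ} (hl : ∑ i, l i • (p (i + 1) - p i) = 0) (i j : ZMod m) : l i = l j := by
  -- Summation by parts: the coefficient of `p i` is `l (i - 1) - l i`.
  have hweights : ∑ i, (l (i - 1) - l i) = 0 := by
    rw [Finset.sum_sub_distrib, sub_eq_zero]
    exact Equiv.sum_comp (Equiv.subRight 1) l
  have hpoints : ∑ i, (l (i - 1) - l i) • p i = 0 := by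
    simp only [sub_smul, smul_sub, Finset.sum_sub_distrib] at hl ⊢
    rw [← hl, ← Equiv.sum_comp (Equiv.addRight 1) fun i => l (i - 1) • p i]
    simp
  refine zmod_forall_of_add_one (P := fun i => l i = l j) rfl (fun i hi => ?_) i
  have hi' := affineIndependent_iff.1 hp Finset.univ _ hweights hpoints (i + 1) (Finset.mem_univ _)
  rw [add_sub_cancel_right, sub_eq_zero] at hi'
  exact hi'.symm.trans hi

lemma eq_zero_of_forall_inner_sub_eq {ι : Type*} {p : ι → E}
    (hp : affineSpan ℝ (Set.range p) = ⊤) {w O : E} {r : ℝ} (h : ∀ i, ⟪w, p i - O⟫ = r) :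
    w = 0 := by
  have hle : vectorSpan ℝ (Set.range p) ≤ (ℝ ∙ w)ᗮ := by
    rw [vectorSpan, span_le]
    rintro _ ⟨_, ⟨i, rfl⟩, _, ⟨j, rfl⟩, rfl⟩
    rw [SetLike.mem_coe, mem_orthogonal_singleton_iff_inner_right]
    change ⟪w, p i - p j⟫ = 0
    rw [← sub_sub_sub_cancel_right _ _ O, inner_sub_right, h, h, sub_self]
  rw [← direction_affineSpan, hp, AffineSubspace.direction_top] at hle
  exact inner_self_eq_zero.1 (mem_orthogonal_singleton_iff_inner_right.1 (hle mem_top))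

variable {p : ZMod m → E} {O : E} {R : ℝ}

lemma exists_eq_smul_of_bisectorReflection_eq (hind : AffineIndependent ℝ p)
    (hspan : affineSpan ℝ (Set.range p) = ⊤) (hS : ∀ i, ‖p i - O‖ = R) {u : ZMod m → E}
    (hu : ∀ i, bisectorReflection (p i) (p (i + 1)) (u i) = u (i + 1)) :
    ∃ l : ℝ, ∀ i, u i = l • (p i - O) := by
  choose l hl using fun i => exists_bisectorReflection_eq_sub_smul (p i) (p (i + 1)) (u i)
  simp only [hu] at hl
  have hsum : ∑ i, l i • (p (i + 1) - p i) = 0 := by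
    have hincr : ∀ i, l i • (p (i + 1) - p i) = u i - u (i + 1) := fun i => by
      rw [hl, sub_sub_cancel]
    simp only [hincr, Finset.sum_sub_distrib]
    exact sub_eq_zero.2 (Equiv.sum_comp (Equiv.addRight 1) u).symm
  let w : E := u 0 + l 0 • (p 0 - O)
  have hw : ∀ i, u i + l 0 • (p i - O) = w := zmod_forall_of_add_one rfl fun i hi => by
    rw [hl, eq_of_sum_smul_sub_eq_zero hind hsum i 0, ← hi]
    module
  have hinner : ∀ i, ⟪p i - O, u i⟫ = ⟪p 0 - O, u 0⟫ := zmod_forall_of_add_one rfl fun i hi => by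
    rw [← hu, inner_sub_bisectorReflection ((hS i).trans (hS _).symm), hi]
  have hw0 : w = 0 := by
    refine eq_zero_of_forall_inner_sub_eq hspan (O := O) (r := ⟪p 0 - O, u 0⟫ + l 0 * R ^ 2) ?_
    intro i
    rw [← hw i, inner_add_left, real_inner_smul_left, real_inner_comm, hinner,
      real_inner_self_eq_norm_sq, hS]
  exact ⟨-l 0, fun i => by rw [neg_smul]; exact eq_neg_of_add_eq_zero_left ((hw i).trans hw0)⟩

lemma eq_of_inner_eq_of_finrank_eq_one {L : Submodule ℝ E} (hL : finrank ℝ L = 1) {a u v : E}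
    (hu : u ∈ L) (hv : v ∈ L) (h0 : ⟪a, v⟫ ≠ 0) (huv : ⟪a, u⟫ = ⟪a, v⟫) : u = v := by
  have hv0 : v ≠ 0 := by
    rintro rfl
    exact h0 (inner_zero_right a)
  rw [eq_span_singleton_of_mem_of_finrank_eq_one hL hv hv0, mem_span_singleton] at hu
  obtain ⟨s, rfl⟩ := hu
  rw [real_inner_smul_right, mul_eq_right₀ h0] at huv
  rw [huv, one_smul]

lemma forall_le_orthogonal_or_forall_le_span (hind : AffineIndependent ℝ p)
    (hspan : affineSpan ℝ (Set.range p) = ⊤) (hS : ∀ i, ‖p i - O‖ = R)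
    {L : ZMod m → Submodule ℝ E} (hL : ∀ i, finrank ℝ (L i) = 1)
    (hrefl : ∀ i, ∀ v ∈ L i, bisectorReflection (p i) (p (i + 1)) v ∈ L (i + 1)) :
    (∀ i, L i ≤ (ℝ ∙ (p i - O))ᗮ) ∨ ∀ i, L i ≤ ℝ ∙ (p i - O) := by
  refine or_iff_not_imp_left.2 fun hnot => ?_
  obtain ⟨j, v, hv, hv0⟩ : ∃ j, ∃ v ∈ L j, ⟪p j - O, v⟫ ≠ 0 := by
    simpa only [SetLike.le_def, mem_orthogonal_singleton_iff_inner_right, not_forall,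
      exists_prop] using hnot
  have hinner (i : ZMod m) (v : E) :
      ⟪p (i + 1) - O, bisectorReflection (p i) (p (i + 1)) v⟫ = ⟪p i - O, v⟫ :=
    inner_sub_bisectorReflection ((hS i).trans (hS _).symm) v
  have hunit : ∀ i, ∃ u ∈ L i, ⟪p i - O, u⟫ = 1 := by
    refine zmod_forall_of_add_one (j := j) ⟨⟪p j - O, v⟫⁻¹ • v, (L j).smul_mem _ hv, ?_⟩ ?_
    · rw [real_inner_smul_right, inv_mul_cancel₀ hv0]
    · rintro i ⟨u, hu, hu1⟩
      exact ⟨_, hrefl i u hu, (hinner i u).trans hu1⟩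
  choose u hu hu1 using hunit
  have hstep : ∀ i, bisectorReflection (p i) (p (i + 1)) (u i) = u (i + 1) := fun i =>
    eq_of_inner_eq_of_finrank_eq_one (hL _) (hrefl i _ (hu i)) (hu _)
      (by rw [hu1]; exact one_ne_zero) (by rw [hinner, hu1, hu1])
  obtain ⟨l, hl⟩ := exists_eq_smul_of_bisectorReflection_eq hind hspan hS hstep
  intro i
  have hui : u i ≠ 0 := fun h => by simpa [h] using hu1 i
  rw [eq_span_singleton_of_mem_of_finrank_eq_one (hL i) (hu i) hui, span_singleton_le_iff_mem]
  exact mem_span_singleton.2 ⟨l, (hl i).symm⟩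

end Cycle

theorem touching_coins_general {E : Type*} [NormedAddCommGroup E] [InnerProductSpace ℝ E]
    {m : ℕ} (hm : 1 < m) {V : ZMod m → Submodule ℝ E} {c : ZMod m → E} {ρ : ZMod m → ℝ}
    {p : ZMod m → E} (hV : ∀ i, finrank ℝ (V i) = 2) (hρ : ∀ i, 0 < ρ i)
    (htouch : ∀ i, p i ∈ subsphere (V i) (c i) (ρ i) ∩
      subsphere (V (i + 1)) (c (i + 1)) (ρ (i + 1)))
    (htangent : ∀ i, tangentDirection (V i) (c i) (p i) =
      tangentDirection (V (i + 1)) (c (i + 1)) (p i))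
    (hind : AffineIndependent ℝ p) (hspan : affineSpan ℝ (Set.range p) = ⊤)
    (hnotsphere : ¬ ∃ (O' : E) (R' : ℝ), ∀ i, subsphere (V i) (c i) (ρ i) ⊆ {x | ‖x - O'‖ = R'})
    {O : E} {R : ℝ} (hS : ∀ i, ‖p i - O‖ = R) (i : ZMod m) :
    tangentDirection (V i) (c i) (p i) ≤ ℝ ∙ (p i - O) := by
  have : Fact (1 < m) := ⟨hm⟩
  have hL : ∀ i, finrank ℝ (tangentDirection (V i) (c i) (p i)) = 1 := fun i =>
    finrank_tangentDirection (hV i) (ne_center_of_mem_subsphere (hρ i) (htouch i).1) (htouch i).1.2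
  have hrefl : ∀ i, ∀ v ∈ tangentDirection (V i) (c i) (p i),
      bisectorReflection (p i) (p (i + 1)) v ∈
        tangentDirection (V (i + 1)) (c (i + 1)) (p (i + 1)) := fun i v hv =>
    bisectorReflection_mem_tangentDirection (htouch i).2 (htouch (i + 1)).1 (htangent i ▸ hv)
  have hdichotomy := forall_le_orthogonal_or_forall_le_span hind hspan hS hL hrefl
  refine hdichotomy.resolve_left (fun horth => ?_) i
  refine hnotsphere ⟨O, R, fun i => ?_⟩
  obtain ⟨j, rfl⟩ : ∃ j, j + 1 = i := ⟨i - 1, sub_add_cancel i 1⟩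
  have hne : p j ≠ p (j + 1) := fun h => by simpa using hind.injective h
  exact subsphere_subset_sphere (htouch j).2 (htouch (j + 1)).1 hne (hS j) (hS (j + 1))
    (htangent j ▸ horth j)

section CrossProduct

lemma inner_self_cross3 (u v : EuclideanSpace ℝ (Fin 3)) : ⟪u, cross3 u v⟫ = 0 := by
  rw [real_inner_comm]
  exact dot_self_cross u.ofLp v.ofLp

lemma inner_cross3_self (u v : EuclideanSpace ℝ (Fin 3)) : ⟪v, cross3 u v⟫ = 0 := by
  rw [real_inner_comm]
  exact dot_cross_self u.ofLp v.ofLp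

lemma cross3_ne_zero {u v : EuclideanSpace ℝ (Fin 3)} (hu : u ≠ 0) (hv : v ≠ 0)
    (huv : ⟪u, v⟫ = 0) : cross3 u v ≠ 0 := by
  have hnorm : ‖cross3 u v‖ = ‖u‖ * ‖v‖ * Real.sin (InnerProductGeometry.angle u v) :=
    InnerProductGeometry.norm_ofLp_crossProduct u v
  rw [InnerProductGeometry.inner_eq_zero_iff_angle_eq_pi_div_two] at huv
  rw [huv, Real.sin_pi_div_two, mul_one] at hnorm
  rw [← norm_ne_zero_iff, hnorm]
  exact mul_ne_zero (norm_ne_zero_iff.2 hu) (norm_ne_zero_iff.2 hv)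

lemma finrank_orthogonal_singleton_eq_two {n : EuclideanSpace ℝ (Fin 3)} (hn : n ≠ 0) :
    finrank ℝ (ℝ ∙ n)ᗮ = 2 :=
  have : Fact (finrank ℝ (EuclideanSpace ℝ (Fin 3)) = 2 + 1) := ⟨finrank_euclideanSpace_fin⟩
  finrank_orthogonal_span_singleton hn

lemma cross3_mem_tangentDirection (n c p : EuclideanSpace ℝ (Fin 3)) :
    cross3 n (p - c) ∈ tangentDirection (ℝ ∙ n)ᗮ c p :=
  mem_tangentDirection.2 ⟨inner_cross3_self _ _,
    mem_orthogonal_singleton_iff_inner_right.2 (inner_self_cross3 _ _)⟩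

lemma tangentDirection_eq_of_cross3_eq_smul {n n' c c' p : EuclideanSpace ℝ (Fin 3)} {ρ ρ' t : ℝ}
    (hn : n ≠ 0) (hn' : n' ≠ 0) (hρ : 0 < ρ) (hρ' : 0 < ρ') (hp : p ∈ subsphere (ℝ ∙ n)ᗮ c ρ)
    (hp' : p ∈ subsphere (ℝ ∙ n')ᗮ c' ρ') (ht : cross3 n (p - c) = t • cross3 n' (p - c')) :
    tangentDirection (ℝ ∙ n)ᗮ c p = tangentDirection (ℝ ∙ n')ᗮ c' p := by
  have hpc := ne_center_of_mem_subsphere hρ hp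
  have hpc' := ne_center_of_mem_subsphere hρ' hp'
  have h0 : cross3 n (p - c) ≠ 0 := cross3_ne_zero hn (sub_ne_zero.2 hpc)
    (mem_orthogonal_singleton_iff_inner_right.1 hp.2)
  have hmem : cross3 n (p - c) ∈ tangentDirection (ℝ ∙ n')ᗮ c' p :=
    ht ▸ smul_mem _ t (cross3_mem_tangentDirection n' c' p)
  have hfin := finrank_tangentDirection (finrank_orthogonal_singleton_eq_two hn) hpc hp.2
  have hfin' := finrank_tangentDirection (finrank_orthogonal_singleton_eq_two hn') hpc' hp'.2
  rw [eq_span_singleton_of_mem_of_finrank_eq_one hfin (cross3_mem_tangentDirection n c p) h0,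
    eq_span_singleton_of_mem_of_finrank_eq_one hfin' hmem h0]

end CrossProduct

lemma affineIndependent_of_not_coplanar {k W P : Type*} [DivisionRing k] [AddCommGroup W]
    [Module k W] [AddTorsor W P] {p : ZMod 4 → P}
    (h : ¬ Coplanar k ({p 0, p 1, p 2, p 3} : Set P)) : AffineIndependent k p := by
  have hsub : ({p 0, p 1, p 2, p 3} : Set P) ⊆ Set.range p := by
    simp [Set.insert_subset_iff]
  refine not_imp_comm.1 (fun hp => ?_) h
  exact Coplanar.subset hsub <| coplanar_iff_finrank_le_two.2 <|
    (finrank_vectorSpan_le_iff_not_affineIndependent k p (ZMod.card 4)).2 hp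

/-- **Touching Coins Lemma.**
Four circles in `ℝ³` (with centers `c i`, radii `ρ i > 0`, unit normals `n i`)
touch cyclically at points `p i` (with `C i ∩ C (i+1) = {p i}` and common
tangent lines there).  If the four contact points are not coplanar and the
four circles do not all lie on one common sphere, then each circle intersects
the sphere `S` through `p 0, p 1, p 2, p 3` (center `O`) orthogonally: the
tangent vectors of the two circles at each contact point `p i` are parallel
to the radius vector `p i - O`. -/
theorem touching_coins
    (c : ZMod 4 → EuclideanSpace ℝ (Fin 3)) (ρ : ZMod 4 → ℝ)
    (n : ZMod 4 → EuclideanSpace ℝ (Fin 3)) (p : ZMod 4 → EuclideanSpace ℝ (Fin 3))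
    (hρ : ∀ i, 0 < ρ i) (hn : ∀ i, ‖n i‖ = 1)
    (C : ZMod 4 → Set (EuclideanSpace ℝ (Fin 3)))
    (hC : ∀ i, C i = {x | ‖x - c i‖ = ρ i ∧ ⟪x - c i, n i⟫ = 0})
    -- the circles touch cyclically at the points `p i`
    (htouch : ∀ i, C i ∩ C (i + 1) = {p i})
    (htangent : ∀ i, ∃ t : ℝ,
      cross3 (n i) (p i - c i) = t • cross3 (n (i + 1)) (p i - c (i + 1)))
    -- the four contact points are not coplanar
    (hnotcoplanar : ¬ Coplanar ℝ ({p 0, p 1, p 2, p 3} : Set (EuclideanSpace ℝ (Fin 3))))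
    -- the four circles do not all lie on one common sphere
    (hnotsphere : ¬ ∃ (O' : EuclideanSpace ℝ (Fin 3)) (R' : ℝ),
      ∀ i, C i ⊆ {x | ‖x - O'‖ = R'})
    -- `S` is the sphere with center `O` through the four contact points
    (O : EuclideanSpace ℝ (Fin 3)) (R : ℝ) (hS : ∀ i, ‖p i - O‖ = R) :
    ∀ i, (∃ t : ℝ, cross3 (n i) (p i - c i) = t • (p i - O)) ∧
      (∃ t : ℝ, cross3 (n (i + 1)) (p i - c (i + 1)) = t • (p i - O)) := by
  simp only [hC, ← subsphere_orthogonal_singleton] at htouch hnotsphere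
  have hn0 : ∀ i, n i ≠ 0 := fun i => norm_ne_zero_iff.1 (by rw [hn i]; exact one_ne_zero)
  have hp : ∀ i, p i ∈ subsphere (ℝ ∙ n i)ᗮ (c i) (ρ i) ∩
      subsphere (ℝ ∙ n (i + 1))ᗮ (c (i + 1)) (ρ (i + 1)) := fun i =>
    htouch i ▸ Set.mem_singleton (p i)
  have htangent' : ∀ i, tangentDirection (ℝ ∙ n i)ᗮ (c i) (p i) =
      tangentDirection (ℝ ∙ n (i + 1))ᗮ (c (i + 1)) (p i) := fun i =>
    have ⟨_, ht⟩ := htangent i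
    tangentDirection_eq_of_cross3_eq_smul (hn0 _) (hn0 _) (hρ _) (hρ _) (hp i).1 (hp i).2 ht
  have hind := affineIndependent_of_not_coplanar hnotcoplanar
  have hspan : affineSpan ℝ (Set.range p) = ⊤ :=
    hind.affineSpan_eq_top_iff_card_eq_finrank_add_one.2 (by simp)
  have hrad := touching_coins_general (by norm_num)
    (fun i => finrank_orthogonal_singleton_eq_two (hn0 i)) hρ hp htangent' hind hspan hnotsphere hS
  have hparallel (i : ZMod 4) {v : EuclideanSpace ℝ (Fin 3)}
      (hv : v ∈ tangentDirection (ℝ ∙ n i)ᗮ (c i) (p i)) : ∃ t : ℝ, v = t • (p i - O) := by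
    simpa only [mem_span_singleton, eq_comm] using hrad i hv
  exact fun i => ⟨hparallel i (cross3_mem_tangentDirection _ _ _),
    hparallel i (htangent' i ▸ cross3_mem_tangentDirection _ _ _)⟩
end

section
/- Let n ≥ 2, let N ∈ ℝ³ be a unit vector, let v₁, …, v_{2n} ∈ ℝ³ be unit vectors orthogonal to N (indices cyclic modulo 2n), and let r₁, …, r_{2n} > 0 satisfy Σ_{j=1}^{2n} (−1)^j (1/r_j + 1/r_{j+1}) v_j = 0. For real numbers φ and θ define the rotated unit vectors v_j^{(φ)} := cos φ · v_j + sin φ cos θ · (N × v_j) + sin φ sin θ · N. Then Σ_{j=1}^{2n} (−1)^j (1/r_j + 1/r_{j+1}) v_j^{(φ)} = 0. -/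
/-!
The rotation `v ↦ v ^ (φ)` is an affine map of `ℝ³`: rotating in the tangent plane of the sphere
adds to a linear image of the edge `v` the fixed normal component `(sin φ sin θ) • N`. An affine map
preserves the closing condition of a polygon as soon as the coefficients of the edges sum to zero.
Here they do: the sign `(-1) ^ j` alternates around the whole cycle because its length is even, so
that every `1 / r j` occurs twice in the sum, with opposite signs.
-/

open RealInnerProductSpace

section AlternatingSum

variable {R : Type*} [Ring R] {m : ℕ} [NeZero m]

lemma neg_one_pow_val_add_one (hm : Even m) (j : ZMod m) :
    (-1 : R) ^ (j + 1).val = -(-1) ^ j.val := by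
  have hmod : (j + 1).val ≡ j.val + 1 [MOD m] :=
    (ZMod.natCast_eq_natCast_iff _ _ _).1 (by simp)
  have hmod_two : (j + 1).val % 2 = (j.val + 1) % 2 := hmod.of_dvd hm.two_dvd
  rw [neg_one_pow_eq_pow_mod_two, hmod_two, ← neg_one_pow_eq_pow_mod_two, pow_succ, mul_neg_one]

lemma sum_neg_one_pow_val_mul_add_shift (hm : Even m) (a : ZMod m → R) :
    ∑ j, (-1) ^ j.val * (a j + a (j + 1)) = 0 := by
  have shift : ∑ j, (-1) ^ j.val * a (j + 1) = -∑ j, (-1) ^ j.val * a j :=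
    calc
      ∑ j, (-1) ^ j.val * a (j + 1) = ∑ j : ZMod m, -((-1) ^ (j + 1).val * a (j + 1)) := by
        simp only [neg_one_pow_val_add_one hm, neg_mul, neg_neg]
      _ = -∑ j, (-1) ^ j.val * a j := by
        rw [Finset.sum_neg_distrib]
        exact congrArg Neg.neg <|
          Equiv.sum_comp (Equiv.addRight (1 : ZMod m)) fun j => (-1) ^ j.val * a j
  simp only [mul_add, Finset.sum_add_distrib, shift, add_neg_cancel]

end AlternatingSum

section AffineImage

variable {R V W : Type*} [Ring R] [AddCommGroup V] [Module R V] [AddCommGroup W] [Module R W]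

lemma sum_smul_affineMap_apply {ι : Type*} {s : Finset ι} {c : ι → R} (hc : ∑ i ∈ s, c i = 0)
    (f : V →ᵃ[R] W) (v : ι → V) :
    ∑ i ∈ s, c i • f (v i) = f.linear (∑ i ∈ s, c i • v i) :=
  calc
    ∑ i ∈ s, c i • f (v i) = ∑ i ∈ s, c i • (f.linear (v i) + f 0) :=
      Finset.sum_congr rfl fun i _ => congrArg (c i • ·) (congrFun f.decomp (v i))
    _ = f.linear (∑ i ∈ s, c i • v i) + (∑ i ∈ s, c i) • f 0 := by
      simp only [smul_add, Finset.sum_add_distrib, map_sum, map_smul, Finset.sum_smul]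
    _ = f.linear (∑ i ∈ s, c i • v i) := by rw [hc, zero_smul, add_zero]

theorem rotated_dual_polygon_closes_general {m : ℕ} [NeZero m] (hm : Even m) (a : ZMod m → R)
    {v : ZMod m → V} (hclosed : ∑ j, ((-1) ^ j.val * (a j + a (j + 1))) • v j = 0)
    (f : V →ᵃ[R] W) :
    ∑ j, ((-1) ^ j.val * (a j + a (j + 1))) • f (v j) = 0 := by
  rw [sum_smul_affineMap_apply (sum_neg_one_pow_val_mul_add_shift hm a), hclosed, map_zero]

end AffineImage

/-- The linear map `v ↦ N × v`, obtained from Mathlib's cross product on `Fin 3 → ℝ`. -/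
noncomputable def cross3Left (N : EuclideanSpace ℝ (Fin 3)) :
    EuclideanSpace ℝ (Fin 3) →ₗ[ℝ] EuclideanSpace ℝ (Fin 3) :=
  (WithLp.linearEquiv 2 ℝ (Fin 3 → ℝ)).symm.toLinearMap ∘ₗ
    crossProduct N.ofLp ∘ₗ (WithLp.linearEquiv 2 ℝ (Fin 3 → ℝ)).toLinearMap

lemma cross3Left_apply (N v : EuclideanSpace ℝ (Fin 3)) : cross3Left N v = cross3 N v :=
  rfl

/-- The rotation `v ↦ v ^ (φ)` of edge directions in the tangent planes of the sphere, extended from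
the vectors orthogonal to `N` to an affine map of `ℝ³`. -/
noncomputable def tangentRotation (N : EuclideanSpace ℝ (Fin 3)) (φ θ : ℝ) :
    EuclideanSpace ℝ (Fin 3) →ᵃ[ℝ] EuclideanSpace ℝ (Fin 3) :=
  (Real.cos φ • LinearMap.id + (Real.sin φ * Real.cos θ) • cross3Left N).toAffineMap +
    AffineMap.const ℝ _ ((Real.sin φ * Real.sin θ) • N)

lemma tangentRotation_apply (N v : EuclideanSpace ℝ (Fin 3)) (φ θ : ℝ) :
    tangentRotation N φ θ v = Real.cos φ • v + (Real.sin φ * Real.cos θ) • cross3 N v +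
      (Real.sin φ * Real.sin θ) • N := by
  rw [← cross3Left_apply]
  rfl

/-- **The rotated dual polygon still closes up (associated family).**
Let `N ∈ ℝ³` be a unit vector, `v j` (indices cyclic mod `2n`, `n ≥ 2`) unit
vectors orthogonal to `N`, and `r j > 0` with
`∑ (-1)^j (1/r j + 1/r (j+1)) • v j = 0`.  For reals `φ, θ` let
`v j ^ (φ) = cos φ • v j + sin φ cos θ • (N × v j) + sin φ sin θ • N`.
Then `∑ (-1)^j (1/r j + 1/r (j+1)) • v j ^ (φ) = 0`. -/
theorem rotated_dual_polygon_closes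
    (n : ℕ) [NeZero (2 * n)] (hn : 2 ≤ n)
    (N : EuclideanSpace ℝ (Fin 3)) (hN : ‖N‖ = 1)
    (v : ZMod (2 * n) → EuclideanSpace ℝ (Fin 3))
    (hv : ∀ j, ‖v j‖ = 1) (hvN : ∀ j, ⟪v j, N⟫ = 0)
    (r : ZMod (2 * n) → ℝ) (hr : ∀ j, 0 < r j)
    (hclosed : ∑ j : ZMod (2 * n), ((-1 : ℝ) ^ j.val * ((r j)⁻¹ + (r (j + 1))⁻¹)) • v j = 0)
    (φ θ : ℝ) :
    ∑ j : ZMod (2 * n), ((-1 : ℝ) ^ j.val * ((r j)⁻¹ + (r (j + 1))⁻¹)) •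
      (Real.cos φ • v j + (Real.sin φ * Real.cos θ) • cross3 N (v j) +
        (Real.sin φ * Real.sin θ) • N) = 0 := by
  simpa only [tangentRotation_apply] using
    rotated_dual_polygon_closes_general (even_two_mul n) (fun j => (r j)⁻¹) hclosed
      (tangentRotation N φ θ)
end

section
/- Let r₁ ∈ (0, π) and r₂ ∈ (0, π/2), and set ρ₁ = log(tan(r₁/2)) and ρ₂ = log(tan(r₂/2)). Then arctan(tan r₂ / sin r₁) = arctan(e^{ρ₂ − ρ₁}) + arctan(e^{ρ₂ + ρ₁}). -/
/-! In terms of the half-angle tangents `s = tan (r₁ / 2)` and `t = tan (r₂ / 2)` the two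
exponentials are `t / s` and `t * s`. Their product is `t ^ 2`, which is less than `1` because
`cos r₂ > 0`, so the arctangent addition formula applies without a correction by `π`; the half-angle
formulas turn the resulting argument into `tan r₂ / sin r₁`. -/

open Real

theorem arctan_div_add_arctan_mul {s t : ℝ} (hs : s ≠ 0) (ht : t ^ 2 < 1) :
    arctan (t / s) + arctan (t * s) = arctan (2 * t / (1 - t ^ 2) / (2 * s / (1 + s ^ 2))) := by
  have hprod : t / s * (t * s) = t ^ 2 := by field_simp
  have ht' : 1 - t ^ 2 ≠ 0 := (sub_pos.2 ht).ne'
  rw [arctan_add (hprod.trans_lt ht), hprod]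
  congr 1
  field_simp

theorem tan_half_ne_zero {x : ℝ} (hx : sin x ≠ 0) : tan (x / 2) ≠ 0 := by
  contrapose! hx
  rw [sin_eq_two_mul_tan_half_div_one_add_tan_half_sq, hx, mul_zero, zero_div]

theorem tan_half_sq_lt_one {x : ℝ} (hx : 0 < cos x) : tan (x / 2) ^ 2 < 1 := by
  have hx' : cos x ≠ -1 := by linarith
  rw [cos_eq_two_mul_tan_half_div_one_sub_tan_half_sq x hx'] at hx
  exact sub_pos.1 ((div_pos_iff_of_pos_right (by positivity)).1 hx)

theorem arctan_tan_div_sin {x y : ℝ} (hx : sin x ≠ 0) (hy : 0 < cos y) :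
    arctan (tan y / sin x) =
      arctan (tan (y / 2) / tan (x / 2)) + arctan (tan (y / 2) * tan (x / 2)) := by
  rw [arctan_div_add_arctan_mul (tan_half_ne_zero hx) (tan_half_sq_lt_one hy),
    ← tan_eq_one_sub_tan_half_sq_div_one_add_tan_half_sq,
    ← sin_eq_two_mul_tan_half_div_one_add_tan_half_sq]

/-- **Key trigonometric identity for the spherical circle pattern functional.**
For `r₁ ∈ (0, π)`, `r₂ ∈ (0, π/2)` and `ρᵢ = log tan(rᵢ/2)`:
`arctan(tan r₂ / sin r₁) = arctan e^{ρ₂−ρ₁} + arctan e^{ρ₂+ρ₁}`. -/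
theorem arctan_identity_spherical
    (r₁ r₂ ρ₁ ρ₂ : ℝ)
    (hr₁ : r₁ ∈ Set.Ioo 0 Real.pi) (hr₂ : r₂ ∈ Set.Ioo 0 (Real.pi / 2))
    (hρ₁ : ρ₁ = Real.log (Real.tan (r₁ / 2)))
    (hρ₂ : ρ₂ = Real.log (Real.tan (r₂ / 2))) :
    Real.arctan (Real.tan r₂ / Real.sin r₁) =
      Real.arctan (Real.exp (ρ₂ - ρ₁)) + Real.arctan (Real.exp (ρ₂ + ρ₁)) := by
  obtain ⟨hr₁_pos, hr₁_lt⟩ := hr₁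
  obtain ⟨hr₂_pos, hr₂_lt⟩ := hr₂
  have htan₁ : 0 < tan (r₁ / 2) := tan_pos_of_pos_of_lt_pi_div_two (by linarith) (by linarith)
  have htan₂ : 0 < tan (r₂ / 2) := tan_pos_of_pos_of_lt_pi_div_two (by linarith) (by linarith)
  have hsin : sin r₁ ≠ 0 := (sin_pos_of_pos_of_lt_pi hr₁_pos hr₁_lt).ne'
  have hcos : 0 < cos r₂ := cos_pos_of_mem_Ioo ⟨by linarith, hr₂_lt⟩
  rw [hρ₁, hρ₂, exp_sub, exp_add, exp_log htan₁, exp_log htan₂, arctan_tan_div_sin hsin hcos]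
end

section
/- Let V be a finite set, G a finite simple graph on V with edge set E, and Φ : V → ℝ. Define F : ℝ → ℝ by F(x) = ∫_{−∞}^x arctan(eᵘ) du (this improper integral converges), and define S : (V → ℝ) → ℝ by S(ρ) = Σ_{{j,k}∈E} [F(ρ_k − ρ_j) + F(ρ_j − ρ_k) − F(ρ_j + ρ_k) − F(−ρ_j − ρ_k) − π(ρ_j + ρ_k)] + Σ_{j∈V} Φ(j) ρ_j. Then S is differentiable, and for every j ∈ V its partial derivative is ∂S/∂ρ_j = Φ(j) − 2 Σ_{k adjacent to j} (arctan(e^{ρ_k − ρ_j}) + arctan(e^{ρ_k + ρ_j})). Consequently, ρ is a critical point of S if and only if for every j ∈ V: 2 Σ_{k adjacent to j} (arctan(e^{ρ_k − ρ_j}) + arctan(e^{ρ_k + ρ_j})) = Φ(j). -/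
/-!
Up to a linear term, each summand of the functional is `E (ρ_k - ρ_j) - E (ρ_j + ρ_k)` with the even
function `E t = F t + F (-t)`. Since `F' t = arctan (eᵗ)` and `arctan (e⁻ᵗ) = π / 2 - arctan (eᵗ)`,
we have `E' t = 2 arctan (eᵗ) - π / 2`. In the derivative of a summand the multiples of `π / 2`
cancel against `-π`, which leaves `-2 (arctan e^{ρ_k - ρ_j} + arctan e^{ρ_k + ρ_j})` for each of
the two orientations `(j, k)` of the edge. Regrouping the oriented edges by their origin turns the
sum over edges into a sum over vertices and their neighbours.
-/

open MeasureTheory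

/-- `F(x) = ∫_{−∞}^x arctan(eᵘ) du` (equal to `Im Li₂(i eˣ)`). -/
noncomputable def Fint (x : ℝ) : ℝ := ∫ u in Set.Iio x, Real.arctan (Real.exp u)

/-- The variational functional `S` for orthogonal circle patterns in the sphere:
`S(ρ) = ∑_{{j,k} ∈ E} [F(ρ_k−ρ_j) + F(ρ_j−ρ_k) − F(ρ_j+ρ_k) − F(−ρ_j−ρ_k)
− π(ρ_j+ρ_k)] + ∑_j Φ(j) ρ_j`. -/
noncomputable def circlePatternFunctional {V : Type*} [Fintype V] [DecidableEq V]
    (G : SimpleGraph V) [DecidableRel G.Adj] (Φ : V → ℝ) (ρ : V → ℝ) : ℝ :=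
  (∑ e ∈ G.edgeFinset,
    Sym2.lift ⟨fun j k =>
      Fint (ρ k - ρ j) + Fint (ρ j - ρ k) - Fint (ρ j + ρ k) - Fint (-ρ j - ρ k)
        - Real.pi * (ρ j + ρ k),
      fun j k => by ring_nf⟩ e)
  + ∑ j, Φ j * ρ j

theorem hasDerivAt_integral_Iio {E : Type*} [NormedAddCommGroup E] [NormedSpace ℝ E]
    [CompleteSpace E] {f : ℝ → E} {x b : ℝ} (hxb : x < b) (hf : IntegrableOn f (Set.Iio b))
    (hfx : ContinuousAt f x) :
    HasDerivAt (fun y => ∫ u in Set.Iio y, f u) (f x) x := by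
  have hIio : Set.Iio b ∈ nhds x := Iio_mem_nhds hxb
  have hmeas : StronglyMeasurableAtFilter f (nhds x) := ⟨_, hIio, hf.aestronglyMeasurable⟩
  have hInterval : HasDerivAt (fun y => ∫ u in x..y, f u) (f x) x :=
    intervalIntegral.integral_hasDerivAt_right .refl hmeas hfx
  refine (hInterval.const_add (∫ u in Set.Iio x, f u)).congr_of_eventuallyEq ?_
  filter_upwards [hIio] with y hy
  rw [← intervalIntegral.integral_Iio_sub_Iio' (hf.mono_set (Set.Iio_subset_Iio (le_of_lt hy)))
    (hf.mono_set (Set.Iio_subset_Iio hxb.le)), add_sub_cancel]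

section SumOverDarts

variable {V M : Type*} [Fintype V] [AddCommMonoid M]
  (G : SimpleGraph V) [DecidableRel G.Adj]

theorem sum_dart_eq_sum_neighborFinset (f : V → V → M) :
    ∑ d : G.Dart, f d.fst d.snd = ∑ j, ∑ k ∈ G.neighborFinset j, f j k := by
  classical
  rw [← Finset.sum_fiberwise Finset.univ (fun d : G.Dart => d.fst)]
  refine Finset.sum_congr rfl fun j _ => ?_
  rw [G.dart_fst_fiber, Finset.sum_image (G.dartOfNeighborSet_injective j).injOn]
  exact (Finset.sum_subtype _ (G.mem_neighborFinset j) (f j)).symm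

theorem sum_dart_eq_sum_edgeFinset (f : V → V → M) :
    ∑ d : G.Dart, f d.fst d.snd =
      ∑ e ∈ G.edgeFinset,
        Sym2.lift ⟨fun j k => f j k + f k j, fun _ _ => add_comm _ _⟩ e := by
  classical
  have hmaps : ∀ d ∈ (Finset.univ : Finset G.Dart), d.edge ∈ G.edgeFinset := fun d _ =>
    SimpleGraph.mem_edgeFinset.2 d.edge_mem
  rw [← Finset.sum_fiberwise_of_maps_to hmaps]
  refine Finset.sum_congr rfl fun e he => ?_
  induction e using Sym2.ind with
  | _ j k =>
    let d : G.Dart := ⟨(j, k), SimpleGraph.mem_edgeFinset.1 he⟩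
    change ∑ d' : G.Dart with d'.edge = d.edge, f d'.fst d'.snd =
      f d.fst d.snd + f d.symm.fst d.symm.snd
    rw [d.edge_fiber, Finset.sum_pair d.symm_ne.symm]

end SumOverDarts

section SumSMulProj

open ContinuousLinearMap (proj)

variable {ι R : Type*} [Fintype ι] [CommSemiring R] [TopologicalSpace R] [IsTopologicalSemiring R]

theorem sum_smul_proj_apply_single [DecidableEq ι] (c : ι → R) (i : ι) :
    (∑ j, c j • proj (R := R) (φ := fun _ : ι => R) j) (Pi.single i 1) = c i := by
  simp [Pi.single_apply]

theorem sum_smul_proj_eq_zero_iff (c : ι → R) :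
    ∑ j, c j • proj (R := R) (φ := fun _ : ι => R) j = 0 ↔ ∀ i, c i = 0 := by
  classical
  refine ⟨fun h i => ?_, fun h => by ext; simp [h]⟩
  rw [← sum_smul_proj_apply_single c i, h, zero_apply]

end SumSMulProj

theorem arctan_le_self {x : ℝ} (hx : 0 ≤ x) : Real.arctan x ≤ x := by
  simpa only [Real.tan_arctan] using
    Real.le_tan (Real.arctan_nonneg.2 hx) (Real.arctan_lt_pi_div_two x)

theorem arctan_exp_neg (x : ℝ) :
    Real.arctan (Real.exp (-x)) = Real.pi / 2 - Real.arctan (Real.exp x) := by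
  rw [Real.exp_neg, Real.arctan_inv_of_pos (Real.exp_pos x)]

theorem continuous_arctan_exp : Continuous fun u : ℝ => Real.arctan (Real.exp u) :=
  Real.continuous_arctan.comp Real.continuous_exp

theorem integrableOn_arctan_exp_Iio (x : ℝ) :
    IntegrableOn (fun u => Real.arctan (Real.exp u)) (Set.Iio x) := by
  refine ((integrableOn_exp_Iic x).mono_set Set.Iio_subset_Iic_self).mono'
    continuous_arctan_exp.aestronglyMeasurable (.of_forall fun u => ?_)
  rw [Real.norm_of_nonneg (Real.arctan_nonneg.2 (Real.exp_pos u).le)]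
  exact arctan_le_self (Real.exp_pos u).le

theorem hasDerivAt_Fint (x : ℝ) : HasDerivAt Fint (Real.arctan (Real.exp x)) x :=
  hasDerivAt_integral_Iio (lt_add_one x) (integrableOn_arctan_exp_Iio _)
    continuous_arctan_exp.continuousAt

theorem hasDerivAt_Fint_add_Fint_neg (t : ℝ) :
    HasDerivAt (fun t => Fint t + Fint (-t)) (2 * Real.arctan (Real.exp t) - Real.pi / 2) t := by
  have hneg : HasDerivAt (fun t => Fint (-t)) (-Real.arctan (Real.exp (-t))) t := by
    simpa [Function.comp_def] using (hasDerivAt_Fint (-t)).comp t (hasDerivAt_neg t)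
  refine ((hasDerivAt_Fint t).fun_add hneg).congr_deriv ?_
  rw [arctan_exp_neg]
  ring

/-- The summand of `circlePatternFunctional` belonging to an edge whose end points carry the
logarithmic radii `x` and `y`. -/
noncomputable def edgePotential (x y : ℝ) : ℝ :=
  Fint (y - x) + Fint (x - y) - Fint (x + y) - Fint (-x - y) - Real.pi * (x + y)

/-- Half the angle at the centre of a circle of logarithmic radius `x = log tan (r / 2)` covered by
an orthogonal circle of logarithmic radius `y = log tan (s / 2)`. By the addition theorem its
tangent is `tan s / sin r`, as in a right-angled spherical triangle with legs `r` and `s`. -/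
noncomputable def halfAngle (x y : ℝ) : ℝ :=
  Real.arctan (Real.exp (y - x)) + Real.arctan (Real.exp (y + x))

/-- The total angle at the centre of circle `j` covered by the neighbouring circles, for the
logarithmic radii `ρ`. -/
noncomputable def coveredAngle {V : Type*} (G : SimpleGraph V) (ρ : V → ℝ) (j : V)
    [Fintype (G.neighborSet j)] : ℝ :=
  2 * ∑ k ∈ G.neighborFinset j, halfAngle (ρ j) (ρ k)

theorem edgePotential_comm (x y : ℝ) : edgePotential x y = edgePotential y x := by
  simp only [edgePotential]
  ring_nf

theorem edgePotential_eq_sub_sub (x y : ℝ) :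
    edgePotential x y =
      (Fint (y - x) + Fint (-(y - x))) - (Fint (y + x) + Fint (-(y + x))) - Real.pi * (y + x) := by
  simp only [edgePotential]
  ring_nf

theorem halfAngle_swap (x y : ℝ) :
    halfAngle y x =
      Real.pi / 2 - Real.arctan (Real.exp (y - x)) + Real.arctan (Real.exp (y + x)) := by
  rw [halfAngle, ← arctan_exp_neg, neg_sub, add_comm x y]

theorem hasFDerivAt_edgePotential {E : Type*} [NormedAddCommGroup E] [NormedSpace ℝ E]
    {f g : E → ℝ} {f' g' : E →L[ℝ] ℝ} {v : E} (hf : HasFDerivAt f f' v)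
    (hg : HasFDerivAt g g' v) :
    HasFDerivAt (fun w => edgePotential (f w) (g w))
      ((-2 * halfAngle (f v) (g v)) • f' + (-2 * halfAngle (g v) (f v)) • g') v := by
  have hdiff := (hasDerivAt_Fint_add_Fint_neg (g v - f v)).comp_hasFDerivAt v (hg.fun_sub hf)
  have hsum := (hasDerivAt_Fint_add_Fint_neg (g v + f v)).comp_hasFDerivAt v (hg.fun_add hf)
  have hlin := (hg.fun_add hf).const_mul Real.pi
  refine (((hdiff.fun_sub hsum).fun_sub hlin).congr_fderiv ?_).congr_of_eventuallyEq
    (.of_forall fun w => edgePotential_eq_sub_sub (f w) (g w))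
  rw [halfAngle_swap (f v) (g v), halfAngle]
  module

theorem hasFDerivAt_sum_edgePotential {V : Type*} [Fintype V] (G : SimpleGraph V)
    [DecidableRel G.Adj] (ρ : V → ℝ) :
    HasFDerivAt
      (fun σ : V → ℝ => ∑ e ∈ G.edgeFinset,
        Sym2.lift ⟨fun j k => edgePotential (σ j) (σ k), fun _ _ => edgePotential_comm _ _⟩ e)
      (∑ j, -coveredAngle G ρ j •
        ContinuousLinearMap.proj (R := ℝ) (φ := fun _ : V => ℝ) j) ρ := by
  let angleForm (j k : V) : (V → ℝ) →L[ℝ] ℝ :=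
    (-2 * halfAngle (ρ j) (ρ k)) • ContinuousLinearMap.proj j
  have hregroup : ∑ j, -coveredAngle G ρ j •
      ContinuousLinearMap.proj (R := ℝ) (φ := fun _ : V => ℝ) j =
        ∑ e ∈ G.edgeFinset,
          Sym2.lift ⟨fun j k => angleForm j k + angleForm k j, fun _ _ => add_comm _ _⟩ e := by
    rw [← sum_dart_eq_sum_edgeFinset, sum_dart_eq_sum_neighborFinset]
    simp only [angleForm, coveredAngle, ← Finset.sum_smul, ← Finset.mul_sum, ← neg_mul]
  rw [hregroup]
  refine HasFDerivAt.fun_sum fun e _ => ?_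
  induction e using Sym2.ind with
  | _ j k => exact hasFDerivAt_edgePotential (hasFDerivAt_apply j ρ) (hasFDerivAt_apply k ρ)

theorem hasFDerivAt_circlePatternFunctional {V : Type*} [Fintype V] [DecidableEq V]
    (G : SimpleGraph V) [DecidableRel G.Adj] (Φ ρ : V → ℝ) :
    HasFDerivAt (circlePatternFunctional G Φ)
      (∑ j, (Φ j - coveredAngle G ρ j) •
        ContinuousLinearMap.proj (R := ℝ) (φ := fun _ : V => ℝ) j) ρ := by
  have hlinear : HasFDerivAt (fun σ : V → ℝ => ∑ j, Φ j * σ j)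
      (∑ j, Φ j • ContinuousLinearMap.proj (R := ℝ) (φ := fun _ : V => ℝ) j) ρ :=
    HasFDerivAt.fun_sum fun j _ => (hasFDerivAt_apply j ρ).const_mul (Φ j)
  refine ((hasFDerivAt_sum_edgePotential G ρ).fun_add hlinear).congr_fderiv ?_
  simp only [← Finset.sum_add_distrib, ← add_smul, neg_add_eq_sub]

/-- **Critical points of the spherical circle pattern functional.**
The improper integral defining `F` converges, `S` is differentiable, its
partial derivative in the `j`-th coordinate direction is
`Φ j − 2 ∑_{k ~ j} (arctan e^{ρ_k−ρ_j} + arctan e^{ρ_k+ρ_j})`, and hence `ρ`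
is a critical point of `S` iff the circle-pattern closure equations
`2 ∑_{k ~ j} (arctan e^{ρ_k−ρ_j} + arctan e^{ρ_k+ρ_j}) = Φ j` hold. -/
theorem circlePatternFunctional_deriv
    {V : Type*} [Fintype V] [DecidableEq V]
    (G : SimpleGraph V) [DecidableRel G.Adj] (Φ : V → ℝ) :
    (∀ x : ℝ, IntegrableOn (fun u => Real.arctan (Real.exp u)) (Set.Iio x)) ∧
    Differentiable ℝ (circlePatternFunctional G Φ) ∧
    (∀ (ρ : V → ℝ) (j : V),
      fderiv ℝ (circlePatternFunctional G Φ) ρ (Pi.single j 1) =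
        Φ j - 2 * ∑ k ∈ G.neighborFinset j,
          (Real.arctan (Real.exp (ρ k - ρ j)) + Real.arctan (Real.exp (ρ k + ρ j)))) ∧
    (∀ ρ : V → ℝ,
      fderiv ℝ (circlePatternFunctional G Φ) ρ = 0 ↔
      ∀ j : V, 2 * ∑ k ∈ G.neighborFinset j,
        (Real.arctan (Real.exp (ρ k - ρ j)) + Real.arctan (Real.exp (ρ k + ρ j))) = Φ j) := by
  have hderiv := hasFDerivAt_circlePatternFunctional G Φ
  refine ⟨integrableOn_arctan_exp_Iio, fun ρ => (hderiv ρ).differentiableAt, fun ρ j => ?_,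
    fun ρ => ?_⟩
  · rw [(hderiv ρ).fderiv, sum_smul_proj_apply_single]
    rfl
  · rw [(hderiv ρ).fderiv, sum_smul_proj_eq_zero_iff]
    exact forall_congr' fun j => sub_eq_zero.trans eq_comm
end
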